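/- The following are equivalent: (1) R is almost coherent; (2) for every almost pure short exact sequence 0 → A → B → C → 0 of R-modules with B almost absolutely pure, C is almost absolutely pure; (3) for every pure short exact sequence 0 → A → B → C → 0 with B almost absolutely pure, C is almost absolutely pure; (4) for every pure short exact sequence 0 → A → B → C → 0 with B absolutely pure, C is almost absolutely pure; (5) for every direct system (E_i)_{i∈I} of absolutely pure R-modules over a directed set I, the direct limit lim→ E_i is almost absolutely pure; (6) for every direct system of almost absolutely pure R-modules over a directed set, the direct limit is almost absolutely pure; (7) every R-module has an almost absolutely pure precover; (8) every R-module has an almost absolutely pure cover. -/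

import Mathlib

universe u

open CategoryTheory

/-- A module `M` is almost finitely generated (relative to the ideal `m`). -/
def IsAlmostFG {R : Type u} [CommRing R] (m : Ideal R)
    (M : Type u) [AddCommGroup M] [Module R M] : Prop :=
  ∀ s ∈ m, ∃ (n : ℕ) (f : (Fin n → R) →ₗ[R] M), ∀ y : M, s • y ∈ LinearMap.range f

/-- A module `M` is almost finitely presented (relative to the ideal `m`). -/
def IsAlmostFP {R : Type u} [CommRing R] (m : Ideal R)
    (M : Type u) [AddCommGroup M] [Module R M] : Prop :=
  ∀ s ∈ m, ∀ t ∈ m, ∃ (n k : ℕ) (g : (Fin k → R) →ₗ[R] (Fin n → R))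
    (f : (Fin n → R) →ₗ[R] M),
      f ∘ₗ g = 0 ∧ (∀ y : M, s • y ∈ LinearMap.range f) ∧
        (∀ x ∈ LinearMap.ker f, t • x ∈ LinearMap.range g)

/-- `R` is almost coherent: every almost finitely generated ideal is
almost finitely presented. -/
def IsAlmostCoherent {R : Type u} [CommRing R] (m : Ideal R) : Prop :=
  ∀ I : Ideal R, IsAlmostFG m I → IsAlmostFP m I

/-- A short exact sequence `0 → A →f B → C → 0` is pure if for every module `M`
the map `M ⊗ A → M ⊗ B` is injective. -/
def IsPure {R : Type u} [CommRing R]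
    {A B : Type u} [AddCommGroup A] [Module R A] [AddCommGroup B] [Module R B]
    (f : A →ₗ[R] B) : Prop :=
  ∀ (M : Type u) [AddCommGroup M] [Module R M],
    Function.Injective (LinearMap.lTensor M f)

/-- A short exact sequence `0 → A →f B → C → 0` is almost pure if for every module `M`
the kernel of `M ⊗ A → M ⊗ B` is almost zero. -/
def IsAlmostPure {R : Type u} [CommRing R] (m : Ideal R)
    {A B : Type u} [AddCommGroup A] [Module R A] [AddCommGroup B] [Module R B]
    (f : A →ₗ[R] B) : Prop :=
  ∀ (M : Type u) [AddCommGroup M] [Module R M],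
    ∀ s ∈ m, ∀ x ∈ LinearMap.ker (LinearMap.lTensor M f), s • x = 0

/-- A module `E` is absolutely pure if `Ext¹ᴿ(N, E) = 0` for every finitely presented
module `N`. -/
def IsAbsolutelyPure {R : Type u} [CommRing R]
    (E : Type u) [AddCommGroup E] [Module R E] : Prop :=
  ∀ (N : Type u) [AddCommGroup N] [Module R N], Module.FinitePresentation R N →
    ∀ x : ((Ext R (ModuleCat.{u} R) 1).obj
        (Opposite.op (ModuleCat.of R N))).obj (ModuleCat.of R E),
      x = 0

/-- A module `E` is almost absolutely pure if `Ext¹ᴿ(N, E)` is almost zero for every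
finitely presented module `N`. -/
def IsAlmostAbsolutelyPure {R : Type u} [CommRing R] (m : Ideal R)
    (E : Type u) [AddCommGroup E] [Module R E] : Prop :=
  ∀ (N : Type u) [AddCommGroup N] [Module R N], Module.FinitePresentation R N →
    ∀ s ∈ m, ∀ x : ((Ext R (ModuleCat.{u} R) 1).obj
        (Opposite.op (ModuleCat.of R N))).obj (ModuleCat.of R E),
      s • x = 0

/-- An almost absolutely pure precover of `M`: a map `f : E → M` with `E` almost
absolutely pure, through which every map from an almost absolutely pure module
to `M` factors. -/
def HasAAPPrecoverWith {R : Type u} [CommRing R] (m : Ideal R)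
    (M : Type u) [AddCommGroup M] [Module R M]
    (E : ModuleCat.{u} R) (f : E →ₗ[R] M) : Prop :=
  IsAlmostAbsolutelyPure m E ∧
    ∀ (E' : Type u) [AddCommGroup E'] [Module R E'], IsAlmostAbsolutelyPure m E' →
      ∀ g : E' →ₗ[R] M, ∃ h : E' →ₗ[R] E, g = f ∘ₗ h

/-!
Lifting along free modules turns `s • Ext¹(N, E) = 0`, for all finitely presented `N`, into an
extension property for matrices `a : Rᵏ → Rⁿ`: every `ψ : Rᵏ → E` that kills `ker a` satisfies
`s • ψ = χ ∘ a` for some `χ`. The scalars with this property form an ideal, and `E` is almost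
absolutely pure iff this ideal contains `m`. Almost coherence likewise means that the kernel of
every matrix is finitely generated up to any scalar of `m`.

If `R` is almost coherent, almost finite generation of `ker a` lets one correct lifts along an
almost pure quotient, which gives (2), and hence (6), as a direct limit is a pure quotient of a
direct sum. A map `g : E → M` from an almost absolutely pure module factors through `E ⧸ K`, where
`K` is a maximal pure submodule of `ker g`; this quotient is almost absolutely pure and its size is
bounded in terms of `M`, so the direct sum over all small almost absolutely pure modules and their
maps to `M` is a precover. A precover for a class closed under direct limits refines to a cover by
transfinite composition (Enochs).

Conversely, each of the conditions implies that limits of well-ordered chains of injective modules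
are almost absolutely pure. For (7), the limit `L` of such a chain receives maps from the tree
modules, which are absolutely pure; counting the branches of the tree shows that a precover of `L`
splits, so `L` is a direct summand of an almost absolutely pure module. Now fix a matrix `a`, and
take a generating set `S` of `ker a`, up to a scalar, of least cardinality. If `S` is infinite,
exhaust it by a chain of smaller subsets, and embed the quotients of `Rᵏ` by their spans into
injective modules; the extension property of the limit shows that one of the subsets already
generates `ker a` up to another scalar of `m`.
-/

/-! ### The extension ideal and absolute purity -/

section AbsolutePurity

variable {R : Type u} [CommRing R]

/-- The ideal of those `s` for which `s • ψ` factors through `d : P₁ → P₀` whenever `ψ : P₁ → E`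
kills `ker d`. If `P₁ → P₀ → N → 0` is a projective presentation, this is the annihilator of
`Ext¹(N, E)`, see `annihilator_ext_eq_extensionIdeal`. -/
def extensionIdeal {P₁ P₀ : Type*} [AddCommGroup P₁] [Module R P₁] [AddCommGroup P₀] [Module R P₀]
    (d : P₁ →ₗ[R] P₀) (E : Type*) [AddCommGroup E] [Module R E] : Ideal R where
  carrier := {s | ∀ ψ : P₁ →ₗ[R] E, LinearMap.ker d ≤ LinearMap.ker ψ →
    ∃ χ : P₀ →ₗ[R] E, χ ∘ₗ d = s • ψ}
  zero_mem' _ _ := ⟨0, by simp⟩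
  add_mem' hs ht ψ hψ := by
    obtain ⟨χ, hχ⟩ := hs ψ hψ
    obtain ⟨χ', hχ'⟩ := ht ψ hψ
    exact ⟨χ + χ', by rw [LinearMap.add_comp, hχ, hχ', add_smul]⟩
  smul_mem' r s hs ψ hψ := by
    obtain ⟨χ, hχ⟩ := hs ψ hψ
    exact ⟨r • χ, by rw [LinearMap.smul_comp, hχ, smul_eq_mul, mul_smul]⟩

/-- The ideal of those `s` that annihilate `Ext¹(N, E)` for every finitely presented `N`, expressed
through finite free presentations of `N`. -/
def absPureIdeal (R : Type u) [CommRing R] (E : Type*) [AddCommGroup E] [Module R E] : Ideal R :=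
  ⨅ (k : ℕ) (n : ℕ) (a : (Fin k → R) →ₗ[R] (Fin n → R)), extensionIdeal a E

lemma mem_absPureIdeal {E : Type*} [AddCommGroup E] [Module R E] {s : R} :
    s ∈ absPureIdeal R E ↔ ∀ (k n : ℕ) (a : (Fin k → R) →ₗ[R] (Fin n → R))
      (ψ : (Fin k → R) →ₗ[R] E), LinearMap.ker a ≤ LinearMap.ker ψ →
        ∃ χ : (Fin n → R) →ₗ[R] E, χ ∘ₗ a = s • ψ := by
  simp only [absPureIdeal, Submodule.mem_iInf]
  rfl

lemma exists_comp_eq_of_range_le {P A B : Type*} [AddCommGroup P] [Module R P] [AddCommGroup A]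
    [Module R A] [AddCommGroup B] [Module R B] [Module.Projective R P] {f : A →ₗ[R] B}
    {g : P →ₗ[R] B} (h : LinearMap.range g ≤ LinearMap.range f) : ∃ k : P →ₗ[R] A, f ∘ₗ k = g := by
  obtain ⟨k, hk⟩ := Module.projective_lifting_property f.rangeRestrict
    (g.codRestrict (LinearMap.range f) fun x => h ⟨x, rfl⟩) f.surjective_rangeRestrict
  exact ⟨k, LinearMap.ext fun x => congrArg Subtype.val (LinearMap.congr_fun hk x)⟩

section Presentations

variable {P₁ P₀ Q₁ Q₀ N : Type*} [AddCommGroup P₁] [Module R P₁] [AddCommGroup P₀] [Module R P₀]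
  [AddCommGroup Q₁] [Module R Q₁] [AddCommGroup Q₀] [Module R Q₀] [AddCommGroup N] [Module R N]
  {d : P₁ →ₗ[R] P₀} {p : P₀ →ₗ[R] N} {a : Q₁ →ₗ[R] Q₀} {q : Q₀ →ₗ[R] N}

/-- With comparison maps `α : Q → P`, `β : P → Q` and a homotopy `h : 1 ≃ αβ` in degree zero, an
extension `χ` of `ψ ∘ α₁` yields the extension `χ ∘ β₀ + s • ψ ∘ h` of `ψ`. -/
lemma extensionIdeal_le_of_presentations [Module.Projective R P₀] [Module.Projective R Q₀]
    [Module.Projective R Q₁] (hp : Function.Surjective p) (hq : Function.Surjective q)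
    (hd : LinearMap.range d = LinearMap.ker p) (ha : LinearMap.range a = LinearMap.ker q)
    (E : Type*) [AddCommGroup E] [Module R E] : extensionIdeal a E ≤ extensionIdeal d E := by
  intro s hs ψ hψ
  have hpd : p ∘ₗ d = 0 := LinearMap.range_le_ker_iff.1 hd.le
  have hqa : q ∘ₗ a = 0 := LinearMap.range_le_ker_iff.1 ha.le
  obtain ⟨α₀, hα₀⟩ := Module.projective_lifting_property p q hp
  obtain ⟨β₀, hβ₀⟩ := Module.projective_lifting_property q p hq
  obtain ⟨α₁, hα₁⟩ : ∃ α₁, d ∘ₗ α₁ = α₀ ∘ₗ a := exists_comp_eq_of_range_le <| by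
    rw [hd, LinearMap.range_le_ker_iff, ← LinearMap.comp_assoc, hα₀, hqa]
  obtain ⟨h, hh⟩ : ∃ h, d ∘ₗ h = LinearMap.id - α₀ ∘ₗ β₀ := exists_comp_eq_of_range_le <| by
    rw [hd, LinearMap.range_le_ker_iff, LinearMap.comp_sub, ← LinearMap.comp_assoc, hα₀, hβ₀,
      LinearMap.comp_id, sub_self]
  obtain ⟨χ, hχ⟩ := hs (ψ ∘ₗ α₁) fun x (hx : a x = 0) => hψ <| by
    rw [LinearMap.mem_ker, ← LinearMap.comp_apply, hα₁, LinearMap.comp_apply, hx, map_zero]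
  refine ⟨χ ∘ₗ β₀ + s • (ψ ∘ₗ h), LinearMap.ext fun x => ?_⟩
  obtain ⟨y, hy⟩ : β₀ (d x) ∈ LinearMap.range a := by
    rw [ha, LinearMap.mem_ker, ← LinearMap.comp_apply, hβ₀]
    exact LinearMap.congr_fun hpd x
  have hχy : χ (a y) = s • ψ (α₁ y) := LinearMap.congr_fun hχ y
  have hψx : ψ (h (d x) + α₁ y - x) = 0 := hψ <| by
    have hdh : d (h (d x)) = d x - α₀ (β₀ (d x)) := LinearMap.congr_fun hh (d x)
    have hdα : d (α₁ y) = α₀ (a y) := LinearMap.congr_fun hα₁ y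
    rw [LinearMap.mem_ker, map_sub, map_add, hdh, hdα, hy, sub_add_cancel, sub_self]
  rw [map_sub, map_add, sub_eq_zero] at hψx
  simp only [LinearMap.comp_apply, LinearMap.add_apply, LinearMap.smul_apply, ← hy, hχy, ← hψx,
    smul_add, add_comm]

end Presentations

lemma mem_annihilator_homology_iff {S : ShortComplex (ModuleCat.{u} R)} {s : R} :
    s ∈ Module.annihilator R S.homology ↔
      ∀ x : S.X₂, S.g x = 0 → ∃ y : S.X₁, S.f y = s • x := by
  rw [S.moduleCatHomologyIso.toLinearEquiv.annihilator_eq]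
  change s ∈ Module.annihilator R (LinearMap.ker S.g.hom ⧸ LinearMap.range S.moduleCatToCycles) ↔ _
  simp only [Submodule.annihilator_quotient, Submodule.mem_colon]
  refine ⟨fun h x hx => ?_, fun h x _ => ?_⟩
  · obtain ⟨y, hy⟩ := h ⟨x, hx⟩ trivial
    exact ⟨y, congrArg Subtype.val hy⟩
  · obtain ⟨y, hy⟩ := h x.1 x.2
    exact ⟨y, Subtype.ext hy⟩

lemma annihilator_ext_eq_extensionIdeal_resolution {N : ModuleCat.{u} R}
    (P : ProjectiveResolution N) (E : ModuleCat.{u} R) :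
    Module.annihilator R (((Ext R (ModuleCat.{u} R) 1).obj (Opposite.op N)).obj E) =
      extensionIdeal (P.complex.d 1 0).hom E := by
  let e := P.isoExt (R := R) 1 E ≪≫ ShortComplex.homologyMapIso
    ((P.complex.linearYonedaObj R E).isoSc' 0 1 2 (by simp) (by simp))
  rw [e.toLinearEquiv.annihilator_eq]
  ext s
  refine mem_annihilator_homology_iff.trans ⟨fun h ψ hψ => ?_, fun h ψ hψ => ?_⟩
  · have hcocycle : P.complex.d 2 1 ≫ ModuleCat.ofHom ψ = 0 := by
      ext x
      exact hψ (ConcreteCategory.congr_hom (P.complex.d_comp_d 2 1 0) x)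
    obtain ⟨χ, hχ⟩ := h (ModuleCat.ofHom ψ) hcocycle
    exact ⟨ModuleCat.Hom.hom (show P.complex.X 0 ⟶ E from χ), congrArg ModuleCat.Hom.hom hχ⟩
  · let ψ' : P.complex.X 1 ⟶ E := ψ
    have hψ' : P.complex.d 2 1 ≫ ψ' = 0 := hψ
    obtain ⟨χ, hχ⟩ := h ψ'.hom <| by
      rw [← show LinearMap.range (P.complex.d 2 1).hom = LinearMap.ker (P.complex.d 1 0).hom from
        (P.exact_succ 0).moduleCat_range_eq_ker, LinearMap.range_le_ker_iff, ← ModuleCat.hom_comp,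
        hψ', ModuleCat.hom_zero]
    exact ⟨ModuleCat.ofHom χ, ModuleCat.hom_ext hχ⟩

lemma annihilator_ext_eq_extensionIdeal {P₁ P₀ : Type*} [AddCommGroup P₁] [Module R P₁]
    [AddCommGroup P₀] [Module R P₀] [Module.Projective R P₁] [Module.Projective R P₀]
    {N : Type u} [AddCommGroup N] [Module R N] {d : P₁ →ₗ[R] P₀} {p : P₀ →ₗ[R] N}
    (hp : Function.Surjective p) (hd : LinearMap.range d = LinearMap.ker p)
    (E : Type u) [AddCommGroup E] [Module R E] :
    Module.annihilator R (((Ext R (ModuleCat.{u} R) 1).obj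
      (Opposite.op (ModuleCat.of R N))).obj (ModuleCat.of R E)) = extensionIdeal d E := by
  let P := projectiveResolution (ModuleCat.of R N)
  have : Module.Projective R (P.complex.X 0) :=
    (IsProjective.iff_projective (P.complex.X 0)).2 (P.projective 0)
  have : Module.Projective R (P.complex.X 1) :=
    (IsProjective.iff_projective (P.complex.X 1)).2 (P.projective 1)
  let e : ((ChainComplex.single₀ (ModuleCat.{u} R)).obj (ModuleCat.of R N)).X 0 ≃ₗ[R] N :=
    (HomologicalComplex.singleObjXSelf (ComplexShape.down ℕ) 0 (ModuleCat.of R N)).toLinearEquiv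
  have hπ : Function.Surjective (e.toLinearMap ∘ₗ (P.π.f 0).hom) :=
    e.surjective.comp ((ModuleCat.epi_iff_surjective (P.π.f 0)).1 inferInstance)
  have hrange : LinearMap.range (P.complex.d 1 0).hom =
      LinearMap.ker (e.toLinearMap ∘ₗ (P.π.f 0).hom) := by
    rw [LinearEquiv.ker_comp]
    exact P.exact₀.moduleCat_range_eq_ker
  rw [annihilator_ext_eq_extensionIdeal_resolution P]
  exact le_antisymm (extensionIdeal_le_of_presentations hp hπ hd hrange E)
    (extensionIdeal_le_of_presentations hπ hp hrange hd E)

lemma mem_absPureIdeal_iff_forall_ext {E : Type u} [AddCommGroup E] [Module R E] {s : R} :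
    s ∈ absPureIdeal R E ↔
      ∀ (N : Type u) [AddCommGroup N] [Module R N], Module.FinitePresentation R N →
        s ∈ Module.annihilator R (((Ext R (ModuleCat.{u} R) 1).obj
          (Opposite.op (ModuleCat.of R N))).obj (ModuleCat.of R E)) := by
  refine ⟨fun h N _ _ hN => ?_, fun h => ?_⟩
  · obtain ⟨n, k, q, a, hq, ha⟩ := Module.FinitePresentation.exists_fin' R N
    rw [annihilator_ext_eq_extensionIdeal hq (LinearMap.exact_iff.1 ha).symm]
    exact mem_absPureIdeal.1 h k n a
  · refine mem_absPureIdeal.2 fun k n a => ?_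
    have hpres : Module.FinitePresentation R ((Fin n → R) ⧸ LinearMap.range a) :=
      Module.finitePresentation_of_surjective (LinearMap.range a).mkQ (Submodule.mkQ_surjective _)
        ((Submodule.ker_mkQ (LinearMap.range a)).symm ▸ Submodule.FG.of_finite)
    have hs := h _ hpres
    rwa [annihilator_ext_eq_extensionIdeal (Submodule.mkQ_surjective _)
      (Submodule.ker_mkQ (LinearMap.range a)).symm] at hs

lemma isAlmostAbsolutelyPure_iff_le {m : Ideal R} {E : Type u} [AddCommGroup E] [Module R E] :
    IsAlmostAbsolutelyPure m E ↔ m ≤ absPureIdeal R E :=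
  ⟨fun h s hs => mem_absPureIdeal_iff_forall_ext.2 fun N _ _ hN =>
      Module.mem_annihilator.2 (h N hN s hs),
    fun h N _ _ hN _ hs =>
      Module.mem_annihilator.1 (mem_absPureIdeal_iff_forall_ext.1 (h hs) N hN)⟩

lemma isAbsolutelyPure_iff_eq_top {E : Type u} [AddCommGroup E] [Module R E] :
    IsAbsolutelyPure (R := R) E ↔ absPureIdeal R E = ⊤ := by
  simp only [Ideal.eq_top_iff_one, mem_absPureIdeal_iff_forall_ext, Module.mem_annihilator,
    one_smul, IsAbsolutelyPure]

end AbsolutePurity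

/-! ### Kernels and almost coherence -/

section Coherence

variable {R : Type u} [CommRing R]

/-- The ideal of those `t` for which `ker a` is finitely generated up to `t`. -/
def kerFGIdeal {P Q : Type*} [AddCommGroup P] [Module R P] [AddCommGroup Q] [Module R Q]
    (a : P →ₗ[R] Q) : Ideal R where
  carrier := {t | ∃ G ≤ LinearMap.ker a, G.FG ∧ ∀ x ∈ LinearMap.ker a, t • x ∈ G}
  zero_mem' := ⟨⊥, bot_le, Submodule.fg_bot, fun x _ => by simp⟩
  add_mem' := by
    rintro s t ⟨G, hG, hGfg, hs⟩ ⟨H, hH, hHfg, ht⟩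
    refine ⟨G ⊔ H, sup_le hG hH, hGfg.sup hHfg, fun x hx => ?_⟩
    rw [add_smul]
    exact Submodule.add_mem_sup (hs x hx) (ht x hx)
  smul_mem' := by
    rintro r t ⟨G, hG, hGfg, ht⟩
    refine ⟨G, hG, hGfg, fun x hx => ?_⟩
    rw [smul_eq_mul, mul_smul]
    exact G.smul_mem r (ht x hx)

lemma mem_kerFGIdeal_iff_exists_fin {P Q : Type*} [AddCommGroup P] [Module R P] [AddCommGroup Q]
    [Module R Q] {a : P →ₗ[R] Q} {t : R} :
    t ∈ kerFGIdeal a ↔ ∃ (l : ℕ) (c : (Fin l → R) →ₗ[R] P), a ∘ₗ c = 0 ∧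
      ∀ x ∈ LinearMap.ker a, t • x ∈ LinearMap.range c := by
  constructor
  · rintro ⟨G, hG, hGfg, ht⟩
    obtain ⟨l, c, rfl⟩ := (Submodule.fg_iff_exists_fin_linearMap R P).1 hGfg
    exact ⟨l, c, LinearMap.range_le_ker_iff.1 hG, ht⟩
  · rintro ⟨l, c, hc, ht⟩
    exact ⟨LinearMap.range c, LinearMap.range_le_ker_iff.2 hc, Submodule.FG.of_finite, ht⟩

variable {m : Ideal R}

lemma IsAlmostCoherent.le_kerFGIdeal_functional (hm : m * m = m) (h : IsAlmostCoherent m) {k : ℕ}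
    (f : (Fin k → R) →ₗ[R] R) : m ≤ kerFGIdeal f := by
  refine hm.ge.trans (Ideal.mul_le.2 fun t ht s hs => ?_)
  let F := f.rangeRestrict
  have hfF : ∀ x, f x = F x := fun _ => rfl
  obtain ⟨n, l, g, f', hf'g, hs', ht'⟩ := h (LinearMap.range f)
    (fun _ _ => ⟨k, F, fun _ => f.surjective_rangeRestrict _⟩) s hs t ht
  obtain ⟨a, ha⟩ : ∃ a, f' ∘ₗ a = s • F :=
    exists_comp_eq_of_range_le (by rintro _ ⟨x, rfl⟩; exact hs' (F x))
  obtain ⟨b, hb⟩ := Module.projective_lifting_property F f' f.surjective_rangeRestrict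
  have hFb : ∀ y, F (b y) = f' y := LinearMap.congr_fun hb
  have hf'a : ∀ x, f' (a x) = s • F x := LinearMap.congr_fun ha
  have hf'g : ∀ y, f' (g y) = 0 := LinearMap.congr_fun hf'g
  refine ⟨LinearMap.range (b ∘ₗ g) ⊔ LinearMap.range (b ∘ₗ a - s • LinearMap.id), sup_le ?_ ?_,
    Submodule.FG.of_finite.sup Submodule.FG.of_finite, fun x hx => ?_⟩
  · rintro _ ⟨x, rfl⟩
    simp [hfF, hFb, hf'g]
  · rintro _ ⟨x, rfl⟩
    simp [hfF, hFb, hf'a]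
  · have hFx : F x = 0 := Subtype.ext hx
    obtain ⟨w, hw⟩ := ht' (a x) (by rw [LinearMap.mem_ker, hf'a, hFx, smul_zero])
    have hsplit : (t * s) • x = (b ∘ₗ g) w +
        (b ∘ₗ a - s • LinearMap.id : (Fin k → R) →ₗ[R] (Fin k → R)) (-(t • x)) := by
      simp [hw, mul_smul, smul_comm s t]
    rw [hsplit]
    exact Submodule.add_mem_sup ⟨_, rfl⟩ ⟨_, rfl⟩

lemma isAlmostCoherent_of_le_kerFGIdeal
    (h : ∀ (k n : ℕ) (a : (Fin k → R) →ₗ[R] (Fin n → R)), m ≤ kerFGIdeal a) :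
    IsAlmostCoherent m := by
  intro I hI s hs t ht
  obtain ⟨n, f, hf⟩ := hI s hs
  let a : (Fin n → R) →ₗ[R] (Fin 1 → R) := LinearMap.pi fun _ => I.subtype ∘ₗ f
  have hker : LinearMap.ker a = LinearMap.ker f := by
    rw [LinearMap.ker_pi, iInf_const, LinearMap.ker_comp_of_ker_eq_bot f I.ker_subtype]
  obtain ⟨k, g, hag, htker⟩ := mem_kerFGIdeal_iff_exists_fin.1 (h n 1 a ht)
  rw [← LinearMap.range_le_ker_iff, hker, LinearMap.range_le_ker_iff] at hag
  exact ⟨n, k, g, f, hag, hf, hker ▸ htker⟩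

lemma IsAlmostCoherent.le_kerFGIdeal (hm : m * m = m) (h : IsAlmostCoherent m) {k n : ℕ}
    (f : (Fin k → R) →ₗ[R] (Fin n → R)) : m ≤ kerFGIdeal f := by
  induction n generalizing k with
  | zero =>
    exact fun t _ => ⟨⊤, fun x _ => Subsingleton.elim _ _, Module.finite_def.1 inferInstance,
      fun _ _ => trivial⟩
  | succ n ih =>
    refine hm.ge.trans (Ideal.mul_le.2 fun t ht s hs => ?_)
    let head := LinearMap.proj 0 ∘ₗ f
    let tail := LinearMap.funLeft R R Fin.succ ∘ₗ f
    obtain ⟨l, c, hc, hhead⟩ :=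
      mem_kerFGIdeal_iff_exists_fin.1 (h.le_kerFGIdeal_functional hm head hs)
    obtain ⟨G, hG, hGfg, htail⟩ := ih (tail ∘ₗ c) ht
    refine ⟨G.map c, ?_, hGfg.map c, fun x hx => ?_⟩
    · rintro _ ⟨y, hy, rfl⟩
      exact funext (Fin.cases (LinearMap.congr_fun hc y) (congrFun (hG hy)))
    · have hx : f x = 0 := hx
      obtain ⟨w, hw⟩ := hhead x (by simp [head, hx])
      refine ⟨t • w, htail w (by simp [tail, hw, hx]), ?_⟩
      rw [map_smul, hw, mul_smul]

end Coherence

/-! ### Purity -/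

section Purity

variable {R : Type u} [CommRing R]

section PureIdeal

variable {B C : Type*} [AddCommGroup B] [Module R B] [AddCommGroup C] [Module R C]

/-- The ideal of those `s` such that every finite system of linear equations with constants in `K`
which is solvable in `B` becomes solvable in `K` after multiplying the constants by `s`. The
coefficients of the system are encoded as `b`, a solution in `B` as `y`. -/
def pureIdeal (K : Submodule R B) : Ideal R where
  carrier := {s | ∀ (k n : ℕ) (b : (Fin k → R) →ₗ[R] (Fin n → R)) (y : (Fin n → R) →ₗ[R] B),
    LinearMap.range (y ∘ₗ b) ≤ K →
      ∃ z : (Fin n → R) →ₗ[R] B, LinearMap.range z ≤ K ∧ z ∘ₗ b = s • (y ∘ₗ b)}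
  zero_mem' _ _ _ _ _ := ⟨0, by simp, by simp⟩
  add_mem' hs ht k n b y hy := by
    obtain ⟨z, hz, hzb⟩ := hs k n b y hy
    obtain ⟨z', hz', hzb'⟩ := ht k n b y hy
    refine ⟨z + z', ?_, by rw [LinearMap.add_comp, hzb, hzb', add_smul]⟩
    rintro _ ⟨x, rfl⟩
    exact K.add_mem (hz ⟨x, rfl⟩) (hz' ⟨x, rfl⟩)
  smul_mem' r s hs k n b y hy := by
    obtain ⟨z, hz, hzb⟩ := hs k n b y hy
    refine ⟨r • z, ?_, by rw [LinearMap.smul_comp, hzb, smul_eq_mul, mul_smul]⟩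
    rintro _ ⟨x, rfl⟩
    exact K.smul_mem r (hz ⟨x, rfl⟩)

lemma pureIdeal_eq_top_iff {K : Submodule R B} :
    pureIdeal K = ⊤ ↔ ∀ (k n : ℕ) (b : (Fin k → R) →ₗ[R] (Fin n → R)) (y : (Fin n → R) →ₗ[R] B),
      LinearMap.range (y ∘ₗ b) ≤ K →
        ∃ z : (Fin n → R) →ₗ[R] B, LinearMap.range z ≤ K ∧ z ∘ₗ b = y ∘ₗ b := by
  rw [Ideal.eq_top_iff_one]
  exact forall₅_congr fun k n b y _ => by rw [one_smul]

/-- If `a ∘ c = 0` and `ker a` equals `range c` up to `t`, a lift `φ` of `ψ` may be corrected by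
purity to vanish on `range c`, hence on `ker a` up to `t`. -/
lemma mul_mem_absPureIdeal_of_surjective {g : B →ₗ[R] C} (hg : Function.Surjective g) {r t s : R}
    (hr : r ∈ absPureIdeal R B)
    (ht : ∀ (k n : ℕ) (a : (Fin k → R) →ₗ[R] (Fin n → R)), t ∈ kerFGIdeal a)
    (hs : s ∈ pureIdeal (LinearMap.ker g)) : r * (t * s) ∈ absPureIdeal R C := by
  refine mem_absPureIdeal.2 fun k n a ψ hψ => ?_
  obtain ⟨φ, hφ⟩ := Module.projective_lifting_property g ψ hg
  obtain ⟨l, c, hac, hker⟩ := mem_kerFGIdeal_iff_exists_fin.1 (ht k n a)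
  obtain ⟨z, hgz, hzc⟩ := hs l k c φ <| by
    rw [LinearMap.range_le_ker_iff, ← LinearMap.comp_assoc, hφ, ← LinearMap.range_le_ker_iff]
    exact (LinearMap.range_le_ker_iff.2 hac).trans hψ
  obtain ⟨χ, hχ⟩ := mem_absPureIdeal.1 hr k n a (t • (s • φ - z)) fun x hx => by
    obtain ⟨w, hw⟩ := hker x hx
    have hzw : z (c w) = s • φ (c w) := LinearMap.congr_fun hzc w
    rw [LinearMap.mem_ker, LinearMap.smul_apply, ← map_smul, ← hw, LinearMap.sub_apply, hzw,
      LinearMap.smul_apply, sub_self]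
  refine ⟨g ∘ₗ χ, ?_⟩
  rw [LinearMap.comp_assoc, hχ, LinearMap.comp_smul, LinearMap.comp_smul, LinearMap.comp_sub,
    LinearMap.range_le_ker_iff.1 hgz, sub_zero, LinearMap.comp_smul, hφ, mul_smul, mul_smul]

lemma IsAlmostCoherent.le_absPureIdeal_of_surjective {m : Ideal R} (hm : m * m = m)
    (h : IsAlmostCoherent m) {g : B →ₗ[R] C} (hg : Function.Surjective g)
    (hB : m ≤ absPureIdeal R B) (hker : m ≤ pureIdeal (LinearMap.ker g)) :
    m ≤ absPureIdeal R C := by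
  intro r hr
  have hr : r ∈ m * (m * m) := by rwa [hm, hm]
  refine Ideal.mul_le.2 (fun r hr _ hts => ?_) hr
  refine Submodule.mul_induction_on hts (fun t ht s hs => ?_) fun x y hx hy => ?_
  · exact mul_mem_absPureIdeal_of_surjective hg (hB hr) (fun _ _ a => h.le_kerFGIdeal hm a ht)
      (hker hs)
  · rw [mul_add]
    exact add_mem hx hy

end PureIdeal

section Tensor

open TensorProduct

variable {A B : Type u} [AddCommGroup A] [Module R A] [AddCommGroup B] [Module R B]
  {k n : ℕ}

/-- The cokernel of the transpose of `b : Rᵏ → Rⁿ`. It represents `z ↦ z ∘ b`: the tensor product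
with `A` is the cokernel of `Hom(Rⁿ, A) → Hom(Rᵏ, A)`. -/
abbrev TransposeCokernel (b : (Fin k → R) →ₗ[R] (Fin n → R)) : Type u :=
  (Fin k → R) ⧸ Submodule.span R (Set.range fun (j : Fin n) (i : Fin k) => b (Pi.single i 1) j)

lemma linearMap_fin_apply {E : Type*} [AddCommGroup E] [Module R E] (φ : (Fin n → R) →ₗ[R] E)
    (x : Fin n → R) : φ x = ∑ j, x j • φ (Pi.single j 1) := by
  conv_lhs => rw [pi_eq_sum_univ' x]
  simp only [map_sum, map_smul]

lemma sum_mk_single_tmul_eq_zero_iff (b : (Fin k → R) →ₗ[R] (Fin n → R)) (w : (Fin k → R) →ₗ[R] A) :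
    ∑ i, (Submodule.Quotient.mk (Pi.single i 1) : TransposeCokernel b) ⊗ₜ[R] w (Pi.single i 1) = 0 ↔
      ∃ z : (Fin n → R) →ₗ[R] A, z ∘ₗ b = w := by
  let N := Submodule.span R (Set.range fun (j : Fin n) (i : Fin k) => b (Pi.single i 1) j)
  have hsum (v : Fin k → R) : ∑ i, v i • N.mkQ (Pi.single i 1) = N.mkQ v :=
    (linearMap_fin_apply N.mkQ v).symm
  have hspan : Submodule.span R (Set.range fun i : Fin k => N.mkQ (Pi.single i 1)) = ⊤ := by
    refine eq_top_iff.2 fun x _ => ?_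
    obtain ⟨v, rfl⟩ := N.mkQ_surjective x
    exact hsum v ▸ Submodule.sum_smul_mem _ _ fun i _ => Submodule.subset_span ⟨i, rfl⟩
  refine (vanishesTrivially_iff_sum_tmul_eq_zero R hspan).symm.trans ⟨?_, ?_⟩
  · rintro ⟨l, a, y, hw, ha⟩
    have hcol (q : Fin l) : ∃ d : Fin n → R, ∀ i, ∑ j, d j * b (Pi.single i 1) j = a i q := by
      have ha : (fun i => a i q) ∈ N := by
        rw [← Submodule.Quotient.mk_eq_zero, ← Submodule.mkQ_apply, ← hsum]
        exact ha q
      obtain ⟨d, hd⟩ := (Submodule.mem_span_range_iff_exists_fun R).1 ha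
      exact ⟨d, fun i => by simpa using congrFun hd i⟩
    choose d hd using hcol
    refine ⟨Fintype.linearCombination R fun j => ∑ q, d q j • y q,
      LinearMap.pi_ext' fun i => LinearMap.ext_ring ?_⟩
    simp only [LinearMap.comp_apply, LinearMap.single_apply, Fintype.linearCombination_apply, hw,
      ← hd, Finset.smul_sum, Finset.sum_smul, smul_smul]
    rw [Finset.sum_comm]
    simp only [mul_comm]
  · rintro ⟨z, rfl⟩
    refine ⟨n, fun i => b (Pi.single i 1), fun j => z (Pi.single j 1), fun i => ?_, fun j => ?_⟩
    · exact linearMap_fin_apply z _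
    · rw [hsum fun i => b (Pi.single i 1) j]
      exact (Submodule.Quotient.mk_eq_zero N).2 (Submodule.subset_span ⟨j, rfl⟩)

lemma IsAlmostPure.le_pureIdeal {m : Ideal R} {f : A →ₗ[R] B} (hf : IsAlmostPure m f) :
    m ≤ pureIdeal (LinearMap.range f) := by
  intro s hs k n b y hy
  obtain ⟨w, hw⟩ := exists_comp_eq_of_range_le hy
  let x := ∑ i, (Submodule.Quotient.mk (Pi.single i 1) : TransposeCokernel b) ⊗ₜ[R]
    w (Pi.single i 1)
  have hx : LinearMap.lTensor (TransposeCokernel b) f x = 0 := by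
    rw [map_sum]
    exact (sum_mk_single_tmul_eq_zero_iff b (f ∘ₗ w)).2 ⟨y, hw.symm⟩
  have hsx : s • x = 0 := hf _ s hs x hx
  rw [Finset.smul_sum] at hsx
  simp only [← tmul_smul] at hsx
  obtain ⟨z, hz⟩ := (sum_mk_single_tmul_eq_zero_iff b (s • w)).1 hsx
  refine ⟨f ∘ₗ z, LinearMap.range_comp_le_range z f, ?_⟩
  rw [LinearMap.comp_assoc, hz, LinearMap.comp_smul, hw]

lemma exists_eq_sum_tmul_of_span_eq_top {M A : Type*} [AddCommGroup M] [Module R M]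
    [AddCommGroup A] [Module R A] {e : Fin n → M} (he : Submodule.span R (Set.range e) = ⊤)
    (x : M ⊗[R] A) : ∃ w : Fin n → A, x = ∑ i, e i ⊗ₜ w i := by
  induction x using TensorProduct.induction_on with
  | zero => exact ⟨0, by simp⟩
  | tmul v a =>
    obtain ⟨c, rfl⟩ :=
      (Submodule.mem_span_range_iff_exists_fun R).1 (he ▸ Submodule.mem_top : v ∈ _)
    exact ⟨fun i => c i • a, by simp only [sum_tmul, smul_tmul]⟩
  | add x y hx hy =>
    obtain ⟨w, rfl⟩ := hx
    obtain ⟨w', rfl⟩ := hy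
    exact ⟨w + w', by simp only [Pi.add_apply, tmul_add, Finset.sum_add_distrib]⟩

lemma lTensor_injective_of_finite {f : A →ₗ[R] B} (hf : Function.Injective f)
    (hpure : pureIdeal (LinearMap.range f) = ⊤) (M : Type*) [AddCommGroup M] [Module R M]
    [Module.Finite R M] : Function.Injective (LinearMap.lTensor M f) := by
  rw [injective_iff_map_eq_zero]
  intro x hx
  obtain ⟨n, e, he⟩ := Module.Finite.exists_fin (R := R) (M := M)
  obtain ⟨w, rfl⟩ := exists_eq_sum_tmul_of_span_eq_top he x
  simp only [map_sum, LinearMap.lTensor_tmul] at hx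
  obtain ⟨l, b, y, hy, hb⟩ := vanishesTrivially_of_sum_tmul_eq_zero R he hx
  have hyb : Fintype.linearCombination R y ∘ₗ Fintype.linearCombination R b =
      f ∘ₗ Fintype.linearCombination R w := by
    refine LinearMap.pi_ext' fun i => LinearMap.ext_ring ?_
    simp [Fintype.linearCombination_apply, hy]
  obtain ⟨z, hz, hzb⟩ := pureIdeal_eq_top_iff.1 hpure n l _ _
    (hyb ▸ LinearMap.range_comp_le_range _ f)
  obtain ⟨v, rfl⟩ := exists_comp_eq_of_range_le hz
  refine sum_tmul_eq_zero_of_vanishesTrivially R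
    ⟨l, b, fun j => v (Pi.single j 1), fun i => hf ?_, hb⟩
  have hi := LinearMap.congr_fun (hzb.trans hyb) (Pi.single i 1)
  simp only [LinearMap.comp_apply, Fintype.linearCombination_apply_single, one_smul] at hi
  rw [← hi, linearMap_fin_apply v]

lemma isPure_of_pureIdeal_eq_top {f : A →ₗ[R] B} (hf : Function.Injective f)
    (hpure : pureIdeal (LinearMap.range f) = ⊤) : IsPure f := by
  intro M _ _
  rw [injective_iff_map_eq_zero]
  intro x hx
  obtain ⟨P, hP, t, rfl⟩ := exists_of_fg (R := R) x
  have ht : LinearMap.rTensor B P.subtype (LinearMap.lTensor P f t) = 0 := by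
    rw [← LinearMap.comp_apply, LinearMap.rTensor_comp_lTensor, ← LinearMap.lTensor_comp_rTensor,
      LinearMap.comp_apply, hx]
  obtain ⟨Q, hPQ, hQ, hQt⟩ := eq_zero_of_fg_of_subtype_eq_zero hP ht
  have : Module.Finite R Q := Module.Finite.iff_fg.2 hQ
  have htQ : LinearMap.rTensor A (Submodule.inclusion hPQ) t = 0 := by
    refine (injective_iff_map_eq_zero _).1 (lTensor_injective_of_finite hf hpure Q) _ ?_
    rw [← LinearMap.comp_apply, LinearMap.lTensor_comp_rTensor, ← LinearMap.rTensor_comp_lTensor,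
      LinearMap.comp_apply, hQt]
  rw [← Submodule.subtype_comp_inclusion P Q hPQ, LinearMap.rTensor_comp, LinearMap.comp_apply, htQ,
    map_zero]

lemma IsPure.isAlmostPure (m : Ideal R) {f : A →ₗ[R] B} (hf : IsPure f) : IsAlmostPure m f := by
  intro M _ _ s _ x hx
  rw [(injective_iff_map_eq_zero _).1 (hf M) x hx, smul_zero]

end Tensor

end Purity

/-! ### Closure properties and direct limits -/

section Closure

variable {R : Type u} [CommRing R]

lemma absPureIdeal_le_of_locallySplit {E P : Type*} [AddCommGroup E] [Module R E] [AddCommGroup P]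
    [Module R P] {i : P →ₗ[R] E}
    (h : ∀ (k : ℕ) (ψ : (Fin k → R) →ₗ[R] P), ∃ r : E →ₗ[R] P, r ∘ₗ i ∘ₗ ψ = ψ) :
    absPureIdeal R E ≤ absPureIdeal R P := by
  refine fun s hs => mem_absPureIdeal.2 fun k n a ψ hψ => ?_
  obtain ⟨r, hr⟩ := h k ψ
  obtain ⟨χ, hχ⟩ := mem_absPureIdeal.1 hs k n a (i ∘ₗ ψ) (hψ.trans (LinearMap.ker_le_ker_comp _ _))
  exact ⟨r ∘ₗ χ, by rw [LinearMap.comp_assoc, hχ, LinearMap.comp_smul, hr]⟩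

lemma absPureIdeal_le_of_leftInverse {E P : Type*} [AddCommGroup E] [Module R E] [AddCommGroup P]
    [Module R P] {i : P →ₗ[R] E} {r : E →ₗ[R] P} (h : r ∘ₗ i = LinearMap.id) :
    absPureIdeal R E ≤ absPureIdeal R P :=
  absPureIdeal_le_of_locallySplit fun _ ψ =>
    ⟨r, by rw [← LinearMap.comp_assoc, h, LinearMap.id_comp]⟩

lemma iInf_absPureIdeal_le_pi {ι : Type*} (E : ι → Type*) [∀ i, AddCommGroup (E i)]
    [∀ i, Module R (E i)] : ⨅ i, absPureIdeal R (E i) ≤ absPureIdeal R (∀ i, E i) := by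
  refine fun s hs => mem_absPureIdeal.2 fun k n a ψ hψ => ?_
  have hext (i : ι) : ∃ χ : (Fin n → R) →ₗ[R] E i, χ ∘ₗ a = s • (LinearMap.proj i ∘ₗ ψ) :=
    mem_absPureIdeal.1 ((Submodule.mem_iInf _).1 hs i) k n a _
      (hψ.trans (LinearMap.ker_le_ker_comp _ _))
  choose χ hχ using hext
  exact ⟨LinearMap.pi χ, LinearMap.ext fun x => funext fun i => LinearMap.congr_fun (hχ i) x⟩

open DirectSum in
lemma iInf_absPureIdeal_le_directSum {ι : Type*} (E : ι → Type*) [∀ i, AddCommGroup (E i)]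
    [∀ i, Module R (E i)] :
    ⨅ i, absPureIdeal R (E i) ≤ absPureIdeal R (⨁ i, E i) := by
  classical
  refine fun s hs => mem_absPureIdeal.2 fun k n a ψ hψ => ?_
  have hext (i : ι) : ∃ χ : (Fin n → R) →ₗ[R] E i, χ ∘ₗ a = s • (component R ι E i ∘ₗ ψ) :=
    mem_absPureIdeal.1 ((Submodule.mem_iInf _).1 hs i) k n a _
      (hψ.trans (LinearMap.ker_le_ker_comp _ _))
  choose χ hχ using hext
  let F : Finset ι := Finset.univ.biUnion fun j : Fin k => DFinsupp.support (ψ (Pi.single j 1))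
  refine ⟨∑ i ∈ F, lof R ι E i ∘ₗ χ i, LinearMap.pi_ext' fun j => LinearMap.ext_ring ?_⟩
  let y := ψ (Pi.single j 1)
  have hy : ∑ i ∈ F, lof R ι E i (y i) = y := by
    rw [← Finset.sum_subset (Finset.subset_biUnion_of_mem _ (Finset.mem_univ j))]
    · exact DirectSum.sum_support_of y
    · intro i _ hi
      rw [DFinsupp.notMem_support_iff.1 hi, map_zero]
  calc (∑ i ∈ F, lof R ι E i ∘ₗ χ i) (a (Pi.single j 1))
      = ∑ i ∈ F, lof R ι E i ((χ i ∘ₗ a) (Pi.single j 1)) := by simp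
    _ = s • ∑ i ∈ F, lof R ι E i (y i) := by
      simp only [hχ, Finset.smul_sum, LinearMap.smul_apply, map_smul]
      rfl
    _ = s • ψ (Pi.single j 1) := by rw [hy]

lemma absPureIdeal_eq_top_of_injective {E : Type u} [AddCommGroup E] [Module R E]
    [hE : Module.Injective R E] : absPureIdeal R E = ⊤ := by
  refine (Ideal.eq_top_iff_one _).2 (mem_absPureIdeal.2 fun k n a ψ hψ => ?_)
  obtain ⟨χ, hχ⟩ := hE.out ((LinearMap.ker a).liftQ a le_rfl)
    (LinearMap.ker_eq_bot.1 (Submodule.ker_liftQ_eq_bot _ _ _ le_rfl))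
    ((LinearMap.ker a).liftQ ψ hψ)
  refine ⟨χ, LinearMap.ext fun x => ?_⟩
  rw [one_smul]
  exact hχ (Submodule.Quotient.mk x)

end Closure

section DirectLimit

variable {R : Type u} [CommRing R] {ι : Type*} [Preorder ι] [DecidableEq ι]
  {E : ι → Type*} [∀ i, AddCommGroup (E i)] [∀ i, Module R (E i)]
  {f : ∀ i j, i ≤ j → E i →ₗ[R] E j}

variable (f) in
/-- The canonical presentation of a direct limit as a quotient of the direct sum. -/
noncomputable def directSumToLimit : DirectSum ι E →ₗ[R] Module.DirectLimit E f :=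
  DirectSum.toModule R ι _ (Module.DirectLimit.of R ι E f)

lemma directSumToLimit_lof (i : ι) (x : E i) :
    directSumToLimit f (DirectSum.lof R ι E i x) = Module.DirectLimit.of R ι E f i x :=
  DirectSum.toModule_lof R i x

variable [IsDirectedOrder ι]

lemma exists_of_comp_eq [Nonempty ι] {k : ℕ} (φ : (Fin k → R) →ₗ[R] Module.DirectLimit E f) :
    ∃ (i : ι) (φ' : (Fin k → R) →ₗ[R] E i), Module.DirectLimit.of R ι E f i ∘ₗ φ' = φ := by
  choose i x hx using fun j => Module.DirectLimit.exists_of (φ (Pi.single j 1))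
  obtain ⟨M, hM⟩ := Finite.exists_le i
  refine ⟨M, Fintype.linearCombination R fun j => f (i j) M (hM j) (x j),
    LinearMap.pi_ext' fun j => LinearMap.ext_ring ?_⟩
  simp [hx]

lemma exists_map_comp_eq_zero [DirectedSystem E fun i j h => f i j h] {k : ℕ} {i : ι}
    {φ : (Fin k → R) →ₗ[R] E i} (hφ : Module.DirectLimit.of R ι E f i ∘ₗ φ = 0) :
    ∃ (j : ι) (h : i ≤ j), f i j h ∘ₗ φ = 0 := by
  choose i' hi' hzero using fun j : Fin k =>
    Module.DirectLimit.of.zero_exact (LinearMap.congr_fun hφ (Pi.single j 1))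
  have : Nonempty ι := ⟨i⟩
  obtain ⟨M, hM⟩ := Finite.exists_le i'
  obtain ⟨N, hMN, hiN⟩ := exists_ge_ge M i
  refine ⟨N, hiN, LinearMap.pi_ext' fun j => LinearMap.ext_ring ?_⟩
  rw [LinearMap.zero_comp, LinearMap.zero_apply,
    ← map_zero (f (i' j) N ((hM j).trans hMN)), ← hzero j]
  exact (DirectedSystem.map_map' (f := fun i j h => f i j h) _ _ _).symm

lemma directSumToLimit_surjective : Function.Surjective (directSumToLimit f) := by
  cases isEmpty_or_nonempty ι
  · exact fun x => ⟨0, Subsingleton.elim _ _⟩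
  · intro x
    obtain ⟨i, y, rfl⟩ := Module.DirectLimit.exists_of x
    exact ⟨_, directSumToLimit_lof i y⟩

lemma pureIdeal_ker_directSumToLimit [DirectedSystem E fun i j h => f i j h] :
    pureIdeal (LinearMap.ker (directSumToLimit f)) = ⊤ := by
  refine pureIdeal_eq_top_iff.2 fun k n b y hy => ?_
  cases isEmpty_or_nonempty ι
  · exact ⟨y, fun _ _ => Subsingleton.elim _ _, rfl⟩
  obtain ⟨i, φ, hφ⟩ := exists_of_comp_eq (directSumToLimit f ∘ₗ y)
  obtain ⟨j, hij, hb⟩ := exists_map_comp_eq_zero (f := f) (φ := φ ∘ₗ b) <| by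
    rwa [← LinearMap.comp_assoc, hφ, LinearMap.comp_assoc, ← LinearMap.range_le_ker_iff]
  refine ⟨y - DirectSum.lof R ι E j ∘ₗ f i j hij ∘ₗ φ, ?_, ?_⟩
  · rw [LinearMap.range_le_ker_iff, LinearMap.comp_sub, ← hφ, sub_eq_zero]
    ext x
    simp [directSumToLimit_lof]
  · rw [LinearMap.sub_comp, LinearMap.comp_assoc, LinearMap.comp_assoc, hb, LinearMap.comp_zero,
      sub_zero]

end DirectLimit

/-! ### Well-ordered limits of injective modules detect almost coherence -/

section InjectiveChains

variable {R : Type u} [CommRing R]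

/-- Direct limits of well-ordered chains of injective modules are almost absolutely pure: the
common consequence of conditions (2)–(8) from which almost coherence is recovered. -/
def InjectiveChainLimitsAlmostAbsPure (m : Ideal R) : Prop :=
  ∀ (ι : Type u) [LinearOrder ι] [WellFoundedLT ι] [Nonempty ι] [NoMaxOrder ι]
    (E : ι → Type u) [∀ i, AddCommGroup (E i)] [∀ i, Module R (E i)]
    (f : ∀ i j, i ≤ j → E i →ₗ[R] E j) [DirectedSystem E fun i j h => f i j h],
    (∀ i, Module.Injective R (E i)) → m ≤ absPureIdeal R (Module.DirectLimit E f)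

/-- The power of the injective cogenerator `CharacterModule R` indexed by the dual of `X`: an
injective module containing `X`, functorially in `X`. -/
abbrev InjectivePower (R : Type u) [CommRing R] (X : Type*) [AddCommGroup X] [Module R X] :=
  (X →ₗ[R] CharacterModule R) → CharacterModule R

section InjectivePower

variable (X Y : Type*) [AddCommGroup X] [Module R X] [AddCommGroup Y] [Module R Y]

instance injective_injectivePower (X : Type u) [AddCommGroup X] [Module R X] :
    Module.Injective R (InjectivePower R X) :=
  have : Module.Injective R (CharacterModule R) :=
    Module.Flat.iff_characterModule_injective.1 inferInstance
  Module.Injective.pi R fun _ => CharacterModule R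

/-- Evaluation, embedding `X` into `InjectivePower R X`. -/
def toInjectivePower : X →ₗ[R] InjectivePower R X :=
  LinearMap.pi fun h => h

variable {X Y}

/-- The functoriality of `InjectivePower`. -/
def injectivePowerMap (φ : X →ₗ[R] Y) : InjectivePower R X →ₗ[R] InjectivePower R Y :=
  LinearMap.funLeft R (CharacterModule R) fun h => h ∘ₗ φ

open TensorProduct in
lemma toInjectivePower_injective : Function.Injective (toInjectivePower (R := R) X) := by
  refine (injective_iff_map_eq_zero _).2 fun x hx => ?_
  refine CharacterModule.eq_zero_of_character_apply fun c => ?_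
  let h := CharacterModule.curry (CharacterModule.dual (TensorProduct.rid R X).toLinearMap c)
  have hc : c (TensorProduct.rid R X (x ⊗ₜ[R] (1 : R))) = 0 :=
    DFunLike.congr_fun (congrFun hx h : h x = 0) 1
  rwa [TensorProduct.rid_tmul, one_smul] at hc

instance directedSystem_injectivePower {ι : Type*} [Preorder ι] (X : ι → Type*)
    [∀ i, AddCommGroup (X i)] [∀ i, Module R (X i)] (q : ∀ i j, i ≤ j → X i →ₗ[R] X j)
    [DirectedSystem X fun i j h => q i j h] :
    DirectedSystem (fun i => InjectivePower R (X i)) fun i j h => injectivePowerMap (q i j h) where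
  map_self _ x := funext fun h => congrArg x <| LinearMap.ext fun y =>
    congrArg h (DirectedSystem.map_self' (f := fun i j h => q i j h) y)
  map_map _ _ _ hij hjl x := funext fun h => congrArg x <| LinearMap.ext fun y =>
    congrArg h (DirectedSystem.map_map' (f := fun i j h => q i j h) hij hjl y)

end InjectivePower

lemma directedSystem_quotient {ι P : Type*} [Preorder ι] [AddCommGroup P] [Module R P]
    {G : ι → Submodule R P} (hG : Monotone G) :
    DirectedSystem (fun i => P ⧸ G i) fun _ _ h => Submodule.factor (hG h) where
  map_self _ := by rintro ⟨x⟩; rfl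
  map_map _ _ _ _ _ := by rintro ⟨x⟩; rfl

variable {m : Ideal R}

/-- Extend the map from `Rᵏ` to the limit along `a`; the extension, and the identity it satisfies,
already exist at some stage. -/
lemma exists_forall_mem_ker_smul_eq_zero {ι : Type*} [Preorder ι] [IsDirectedOrder ι] [Nonempty ι]
    [DecidableEq ι] {E : ι → Type*} [∀ i, AddCommGroup (E i)] [∀ i, Module R (E i)]
    {f : ∀ i j, i ≤ j → E i →ₗ[R] E j} [DirectedSystem E fun i j h => f i j h] {k n : ℕ}
    (a : (Fin k → R) →ₗ[R] (Fin n → R)) (θ : ∀ i, (Fin k → R) →ₗ[R] E i)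
    (hθ : ∀ i j h, f i j h ∘ₗ θ i = θ j) {s t : R}
    (hs : s ∈ absPureIdeal R (Module.DirectLimit E f))
    (ht : ∀ x ∈ LinearMap.ker a, ∃ i, t • θ i x = 0) :
    ∃ i, ∀ x ∈ LinearMap.ker a, (s * t) • θ i x = 0 := by
  let o := Module.DirectLimit.of R ι E f
  have hle (i j : ι) (h : i ≤ j) : o i ∘ₗ θ i = o j ∘ₗ θ j := by
    rw [← hθ i j h]
    exact LinearMap.ext fun x => (Module.DirectLimit.of_f (hij := h)).symm
  have hoθ (i j : ι) : o i ∘ₗ θ i = o j ∘ₗ θ j := by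
    obtain ⟨l, hil, hjl⟩ := exists_ge_ge i j
    rw [hle i l hil, hle j l hjl]
  obtain ⟨β⟩ := ‹Nonempty ι›
  obtain ⟨χ, hχ⟩ := mem_absPureIdeal.1 hs k n a (t • (o β ∘ₗ θ β)) fun x hx => by
    obtain ⟨α, hα⟩ := ht x hx
    rw [hoθ β α, LinearMap.mem_ker, LinearMap.smul_apply, LinearMap.comp_apply, ← map_smul, hα,
      map_zero]
  obtain ⟨γ, χ', rfl⟩ := exists_of_comp_eq χ
  obtain ⟨α, hγα, hα⟩ := exists_map_comp_eq_zero (f := f) (φ := χ' ∘ₗ a - (s * t) • θ γ) <| by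
    change o γ ∘ₗ _ = 0
    rw [LinearMap.comp_sub, LinearMap.comp_smul, hoθ γ β, ← LinearMap.comp_assoc, hχ, mul_smul,
      sub_self]
  refine ⟨α, fun x hx => ?_⟩
  rw [LinearMap.comp_sub, LinearMap.comp_smul, hθ] at hα
  have hαx := LinearMap.congr_fun hα x
  simpa [LinearMap.mem_ker.1 hx] using hαx

lemma InjectiveChainLimitsAlmostAbsPure.exists_smul_ker_le (H : InjectiveChainLimitsAlmostAbsPure m)
    {ι : Type u} [LinearOrder ι] [WellFoundedLT ι] [Nonempty ι] [NoMaxOrder ι] {k n : ℕ}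
    (a : (Fin k → R) →ₗ[R] (Fin n → R)) {G : ι → Submodule R (Fin k → R)} (hG : Monotone G) {t : R}
    (ht : ∀ x ∈ LinearMap.ker a, ∃ α, t • x ∈ G α) {s : R} (hs : s ∈ m) :
    ∃ α, ∀ x ∈ LinearMap.ker a, (s * t) • x ∈ G α := by
  have := directedSystem_quotient hG
  let θ (α : ι) : (Fin k → R) →ₗ[R] InjectivePower R ((Fin k → R) ⧸ G α) :=
    toInjectivePower _ ∘ₗ (G α).mkQ
  have hθker (α : ι) (r : R) (x : Fin k → R) : r • θ α x = 0 ↔ r • x ∈ G α := by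
    rw [← map_smul, LinearMap.comp_apply, map_eq_zero_iff _ toInjectivePower_injective,
      Submodule.mkQ_apply, Submodule.Quotient.mk_eq_zero]
  simp only [← hθker] at ht ⊢
  have hlimit := H ι _ (fun _ _ h => injectivePowerMap (Submodule.factor (hG h)))
    fun _ => inferInstance
  exact exists_forall_mem_ker_smul_eq_zero a θ (fun _ _ _ => rfl) (hlimit hs) ht

open Cardinal

lemma InjectiveChainLimitsAlmostAbsPure.exists_smaller_generating_set
    (H : InjectiveChainLimitsAlmostAbsPure m) {k n : ℕ} (a : (Fin k → R) →ₗ[R] (Fin n → R))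
    {S : Set (Fin k → R)} (hS : ℵ₀ ≤ #S) {t : R}
    (ht : ∀ x ∈ LinearMap.ker a, t • x ∈ Submodule.span R S) {s : R} (hs : s ∈ m) :
    ∃ T ⊆ S, #T < #S ∧ ∀ x ∈ LinearMap.ker a, (s * t) • x ∈ Submodule.span R T := by
  let ι := (#S).ord.ToType
  have : NoMaxOrder ι := Cardinal.noMaxOrder hS
  have : Nonempty ι := by
    rw [← mk_ne_zero_iff, mk_ord_toType]
    exact (aleph0_pos.trans_le hS).ne'
  obtain ⟨e⟩ : Nonempty (ι ≃ S) := Cardinal.eq.1 (mk_ord_toType _)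
  let T : ι → Set (Fin k → R) := fun α => (fun β => (e β : Fin k → R)) '' Set.Iio α
  have hG : Monotone fun α => Submodule.span R (T α) := fun α β h =>
    Submodule.span_mono (Set.image_mono (Set.Iio_subset_Iio h))
  have hcover : Submodule.span R S ≤ ⨆ α, Submodule.span R (T α) := by
    refine Submodule.span_le.2 fun y hy => ?_
    obtain ⟨α, hα⟩ := exists_gt (e.symm ⟨y, hy⟩)
    exact Submodule.mem_iSup_of_mem α (Submodule.subset_span ⟨_, hα, by simp⟩)
  obtain ⟨α, hα⟩ := H.exists_smul_ker_le a hG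
    (fun x hx => (Submodule.mem_iSup_of_directed _ hG.directed_le).1 (hcover (ht x hx))) hs
  refine ⟨T α, ?_, mk_image_le.trans_lt ?_, hα⟩
  · rintro _ ⟨β, _, rfl⟩
    exact (e β).2
  · simpa [ι] using mk_Iio_lt α (by simp [ι])

lemma InjectiveChainLimitsAlmostAbsPure.mul_mem_kerFGIdeal (hm : m * m = m)
    (H : InjectiveChainLimitsAlmostAbsPure m) {k n : ℕ} (a : (Fin k → R) →ₗ[R] (Fin n → R))
    {S : Set (Fin k → R)} {t : R} (hS : S ⊆ LinearMap.ker a)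
    (ht : ∀ x ∈ LinearMap.ker a, t • x ∈ Submodule.span R S) {v : R} (hv : v ∈ m) :
    v * t ∈ kerFGIdeal a := by
  induction hρ : #S using WellFoundedLT.induction generalizing S t v with
  | ind ρ ih =>
  subst hρ
  rcases lt_or_ge #S ℵ₀ with hfin | hinf
  · exact Ideal.mul_mem_left _ v ⟨Submodule.span R S, Submodule.span_le.2 hS,
      Submodule.fg_span (lt_aleph0_iff_set_finite.1 hfin), ht⟩
  · rw [← hm] at hv
    refine Submodule.mul_induction_on hv (fun w hw s hs => ?_) fun x y hx hy => ?_
    · obtain ⟨T, hTS, hcard, hT⟩ := H.exists_smaller_generating_set a hinf ht hs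
      rw [mul_assoc]
      exact ih _ hcard (hTS.trans hS) hT hw rfl
    · rw [add_mul]
      exact add_mem hx hy

lemma InjectiveChainLimitsAlmostAbsPure.isAlmostCoherent (hm : m * m = m)
    (H : InjectiveChainLimitsAlmostAbsPure m) : IsAlmostCoherent m := by
  refine isAlmostCoherent_of_le_kerFGIdeal fun k n a v hv => ?_
  rw [← mul_one v]
  exact H.mul_mem_kerFGIdeal hm a subset_rfl
    (fun x hx => by rw [one_smul]; exact Submodule.subset_span hx) hv

end InjectiveChains

/-! ### Tree modules -/

section Trees

variable {ι : Type u} [LinearOrder ι] {X : ι → Type u}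

/-- The nodes at level `α` of the tree whose branches are the elements of `∀ β, X β`. -/
abbrev TreeNode (X : ι → Type u) (α : ι) : Type u := ∀ β : Set.Iio α, X β

/-- The node at level `α` on a branch. -/
def nodeAt (α : ι) (ν : ∀ β, X β) : TreeNode X α := fun β => ν β

lemma nodeAt_eq_of_le {ν ν' : ∀ β, X β} {α γ : ι} (hαγ : α ≤ γ)
    (h : nodeAt γ ν = nodeAt γ ν') : nodeAt α ν = nodeAt α ν' :=
  funext fun β => congrFun h ⟨β, β.2.trans_le hαγ⟩

lemma exists_injOn_nodeAt [NoMaxOrder ι] (F : Finset (∀ β, X β)) (β₀ : ι) :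
    ∃ β, β₀ ≤ β ∧ Set.InjOn (nodeAt β) (F : Set (∀ β, X β)) := by
  have hpair (p : F × F) : ∃ β, nodeAt β p.1.1 = nodeAt β p.2.1 → p.1.1 = p.2.1 := by
    by_cases h : p.1.1 = p.2.1
    · exact ⟨β₀, fun _ => h⟩
    · obtain ⟨δ, hδ⟩ := Function.ne_iff.1 h
      obtain ⟨β, hβ⟩ := exists_gt δ
      exact ⟨β, fun h' => absurd (congrFun h' ⟨δ, hβ⟩) hδ⟩
  choose b hb using hpair
  have : Nonempty ι := ⟨β₀⟩
  obtain ⟨M, hM⟩ := Finite.exists_le b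
  exact ⟨max M β₀, le_max_right _ _, fun ν hν ν' hν' h => hb (⟨ν, hν⟩, ⟨ν', hν'⟩)
    (nodeAt_eq_of_le ((hM _).trans (le_max_left _ _)) h)⟩

lemma exists_injOn_nodeAt_of_finset [NoMaxOrder ι] [Nonempty ι]
    (A : Finset ((∀ β, X β) × ι)) :
    ∃ (F : Finset (∀ β, X β)) (β : ι), Set.InjOn (nodeAt β) (F : Set (∀ β, X β)) ∧
      ∀ q ∈ A, q.1 ∈ F ∧ q.2 ≤ β := by
  classical
  obtain ⟨β₀, hβ₀⟩ := (A.image Prod.snd).exists_le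
  obtain ⟨β, hβ, hinj⟩ := exists_injOn_nodeAt (A.image Prod.fst) β₀
  exact ⟨_, β, hinj, fun q hq => ⟨Finset.mem_image_of_mem _ hq,
    (hβ₀ _ (Finset.mem_image_of_mem _ hq)).trans hβ⟩⟩

/-- Choosing `X γ` in bijection with the `Q`-valued functions on nodes at level `γ`, the family
`h z` becomes a branch, so Cantor's theorem applies. -/
lemma exists_tree_not_injective [WellFoundedLT ι] (Q : Type u) [Nonempty Q] :
    ∃ X : ι → Type u, ∀ h : Set (∀ β, X β) → ∀ _ : ι, (∀ β, X β) → Q,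
      (∀ z γ, (h z γ).FactorsThrough (nodeAt γ)) → ¬ Function.Injective h := by
  let X : ι → Type u := WellFoundedLT.fix fun γ r => (∀ β : Set.Iio γ, r β.1 β.2) → Q
  have hX (γ : ι) : X γ = (TreeNode X γ → Q) := WellFoundedLT.fix_eq _ γ
  refine ⟨X, fun h hfactor hinj => ?_⟩
  choose g hg using fun z γ => (Function.factorsThrough_iff _).1 (hfactor z γ)
  refine Function.cantor_injective (fun z γ => cast (hX γ).symm (g z γ)) fun z z' hzz' => hinj ?_
  funext γ
  rw [hg, hg, (cast_inj (hX γ).symm).1 (congrFun hzz' γ)]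

end Trees

section TreeModule

variable {R : Type u} [CommRing R] {ι : Type u} [LinearOrder ι] {E : ι → Type u}
  [∀ i, AddCommGroup (E i)] [∀ i, Module R (E i)] (f : ∀ i j, i ≤ j → E i →ₗ[R] E j)

/-- Replace the entries of a sequence from `β` on by the images of its `β`-th entry. -/
def continueFrom (β : ι) : (∀ α, E α) →ₗ[R] ∀ α, E α :=
  LinearMap.pi fun α => if h : β ≤ α then f β α h ∘ₗ LinearMap.proj β else LinearMap.proj α

lemma continueFrom_apply_of_le {α β : ι} (h : β ≤ α) (y : ∀ α, E α) :
    continueFrom f β y α = f β α h (y β) := by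
  simp [continueFrom, h]

lemma continueFrom_apply_of_lt {α β : ι} (h : α < β) (y : ∀ α, E α) :
    continueFrom f β y α = y α := by
  simp [continueFrom, h.not_ge]

lemma continueFrom_continueFrom [DirectedSystem E fun i j h => f i j h] {β γ : ι} (h : γ ≤ β)
    (y : ∀ α, E α) : continueFrom f β (continueFrom f γ y) = continueFrom f γ y := by
  funext α
  rcases lt_or_ge α β with hα | hα
  · rw [continueFrom_apply_of_lt f hα]
  · rw [continueFrom_apply_of_le f hα, continueFrom_apply_of_le f h,
      continueFrom_apply_of_le f (h.trans hα)]
    exact DirectedSystem.map_map' (f := fun i j h => f i j h) h hα _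

section AlongBranch

variable {X : ι → Type u}

open Classical in
/-- The family, indexed by the nodes of the tree, whose entries along the branch `ν` are `y` and
which vanishes elsewhere. -/
noncomputable def alongBranch (ν : ∀ β, X β) : (∀ α, E α) →ₗ[R] ∀ α, TreeNode X α → E α :=
  LinearMap.pi fun α => LinearMap.pi fun τ => if nodeAt α ν = τ then LinearMap.proj α else 0

open Classical in
lemma alongBranch_apply (ν : ∀ β, X β) (y : ∀ α, E α) (α : ι) (τ : TreeNode X α) :
    alongBranch (R := R) ν y α τ = if nodeAt α ν = τ then y α else 0 := by
  simp only [alongBranch, LinearMap.pi_apply]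
  split_ifs <;> rfl

end AlongBranch

variable (X : ι → Type u)

/-- Sums of families supported on a branch and eventually coherent along it. -/
noncomputable def treeSum : ((∀ β, X β) × ι →₀ ∀ α, E α) →ₗ[R] ∀ α, TreeNode X α → E α :=
  Finsupp.lsum R fun p => alongBranch p.1 ∘ₗ continueFrom f p.2

/-- The tree module: the families supported on finitely many branches and eventually coherent along
each of them. -/
noncomputable abbrev treeModule : Submodule R (∀ α, TreeNode X α → E α) :=
  LinearMap.range (treeSum f X)

variable {X}

/-- The element of the tree module supported on `ν` which is given by `y` up to level `β` and
coherent from there on. -/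
noncomputable def treePath (ν : ∀ β, X β) (β : ι) : (∀ α, E α) →ₗ[R] treeModule f X :=
  (treeSum f X).rangeRestrict ∘ₗ Finsupp.lsingle (ν, β)

lemma coe_treePath (ν : ∀ β, X β) (β : ι) (y : ∀ α, E α) :
    (treePath f ν β y : ∀ α, TreeNode X α → E α) = alongBranch (R := R) ν (continueFrom f β y) := by
  exact (Finsupp.lsum_single _ _ _ _).trans rfl

lemma rangeRestrict_treeSum (p : (∀ β, X β) × ι →₀ ∀ α, E α) :
    (treeSum f X).rangeRestrict p = ∑ q ∈ p.support, treePath f q.1 q.2 (p q) := by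
  conv_lhs => rw [← Finsupp.sum_single p, Finsupp.sum, map_sum]
  rfl

lemma treePath_eq_of_nodeAt_eq {ν ν' : ∀ β, X β} {γ : ι} (hν : nodeAt γ ν = nodeAt γ ν')
    {y : ∀ α, E α} (hy : y γ = 0) : treePath f ν γ y = treePath f ν' γ y := by
  refine Subtype.ext (funext fun α => funext fun τ => ?_)
  rw [coe_treePath, coe_treePath, alongBranch_apply, alongBranch_apply]
  rcases lt_or_ge α γ with hα | hα
  · rw [nodeAt_eq_of_le hα.le hν]
  · rw [continueFrom_apply_of_le f hα, hy, map_zero, ite_self, ite_self]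

open Classical in
/-- Sum the limits along the branches in `z`. This is well defined, as at a high level the branches
that are involved pass through different nodes. -/
lemma exists_treeModule_limit [NoMaxOrder ι] [Nonempty ι] (z : Set (∀ β, X β)) :
    ∃ g : treeModule f X →ₗ[R] Module.DirectLimit E f, ∀ ν β y,
      g (treePath f ν β y) = if ν ∈ z then Module.DirectLimit.of R ι E f β (y β) else 0 := by
  let G : ((∀ β, X β) × ι →₀ ∀ α, E α) →ₗ[R] Module.DirectLimit E f := Finsupp.lsum R fun p =>
    if p.1 ∈ z then Module.DirectLimit.of R ι E f p.2 ∘ₗ LinearMap.proj p.2 else 0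
  have hG (ν : ∀ β, X β) (β : ι) (y : ∀ α, E α) : G (Finsupp.single (ν, β) y) =
      if ν ∈ z then Module.DirectLimit.of R ι E f β (y β) else 0 := by
    rw [Finsupp.lsum_single]
    split_ifs <;> rfl
  have hker : LinearMap.ker (treeSum f X) ≤ LinearMap.ker G := by
    intro p hp
    obtain ⟨F, α, hinj, hF⟩ := exists_injOn_nodeAt_of_finset p.support
    let H : (∀ α, TreeNode X α → E α) →ₗ[R] Module.DirectLimit E f := ∑ ν ∈ F with ν ∈ z,
      Module.DirectLimit.of R ι E f α ∘ₗ LinearMap.proj (nodeAt α ν) ∘ₗ LinearMap.proj α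
    have hH (ν : ∀ β, X β) (hν : ν ∈ F) (y : ∀ α, E α) : H (alongBranch (R := R) ν y) =
        if ν ∈ z then Module.DirectLimit.of R ι E f α (y α) else 0 := by
      simp only [H, LinearMap.sum_apply, LinearMap.comp_apply, LinearMap.proj_apply,
        alongBranch_apply]
      rw [Finset.sum_filter, Finset.sum_eq_single_of_mem ν hν, if_pos rfl]
      intro ν' hν' hne
      rw [if_neg fun h => hne (hinj hν hν' h).symm, map_zero, ite_self]
    have hHG : H (treeSum f X p) = G p := by
      rw [← Finsupp.sum_single p, Finsupp.sum, map_sum, map_sum, map_sum]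
      refine Finset.sum_congr rfl fun q hq => ?_
      obtain ⟨hqF, hqα⟩ := hF q hq
      rw [hG, treeSum, Finsupp.lsum_single, LinearMap.comp_apply, hH _ hqF,
        continueFrom_apply_of_le f hqα, Module.DirectLimit.of_f]
    rw [LinearMap.mem_ker, ← hHG, LinearMap.mem_ker.1 hp, map_zero]
  refine ⟨(LinearMap.ker (treeSum f X)).liftQ G hker ∘ₗ (treeSum f X).quotKerEquivRange.symm,
    fun ν β y => ?_⟩
  rw [← hG]
  exact congrArg _ ((treeSum f X).quotKerEquivRange_symm_apply_image _ _)

variable (R) in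
lemma exists_tree_forall_exists_eq_of_apply_eq_zero [WellFoundedLT ι] (P : Type u) [AddCommGroup P]
    [Module R P] :
    ∃ X : ι → Type u, ∀ h : Set (∀ β, X β) → treeModule f X →ₗ[R] P, ∃ z z',
      (∀ ν γ y, y γ = 0 → h z (treePath f ν γ y) = h z' (treePath f ν γ y)) ∧
        ∃ ν ∈ z, ν ∉ z' := by
  classical
  obtain ⟨X, hX⟩ := exists_tree_not_injective (ι := ι) ((∀ α, E α) → P)
  refine ⟨X, fun h => ?_⟩
  have hfactors (z : Set (∀ β, X β)) (γ : ι) : Function.FactorsThrough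
      (fun ν y => if y γ = 0 then h z (treePath f ν γ y) else 0) (nodeAt γ) := fun ν ν' hν =>
    funext fun y => ite_congr rfl (fun hy => by rw [treePath_eq_of_nodeAt_eq f hν hy]) fun _ => rfl
  obtain ⟨z, z', heq, hne⟩ := Function.not_injective_iff.1 (hX _ hfactors)
  have heq (ν : ∀ β, X β) (γ : ι) (y : ∀ α, E α) (hy : y γ = 0) :
      h z (treePath f ν γ y) = h z' (treePath f ν γ y) := by
    simpa [hy] using congrFun (congrFun (congrFun heq γ) ν) y
  by_cases hz : z ⊆ z'
  · exact ⟨z', z, fun ν γ y hy => (heq ν γ y hy).symm,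
      Set.not_subset.1 fun hz' => hne (hz.antisymm hz')⟩
  · exact ⟨z, z', heq, Set.not_subset.1 hz⟩

variable [DirectedSystem E fun i j h => f i j h]

lemma treePath_continueFrom (ν : ∀ β, X β) {β γ : ι} (h : γ ≤ β) (y : ∀ α, E α) :
    treePath f ν β (continueFrom f γ y) = treePath f ν γ y :=
  Subtype.ext <| by rw [coe_treePath, coe_treePath, continueFrom_continueFrom f h]

lemma exists_treeModule_retraction {F : Finset (∀ β, X β)} {β : ι}
    (hβ : Set.InjOn (nodeAt β) (F : Set (∀ β, X β))) :
    ∃ r : (∀ α, TreeNode X α → E α) →ₗ[R] treeModule f X,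
      ∀ ν ∈ F, ∀ γ ≤ β, ∀ y, r (treePath f ν γ y) = treePath f ν γ y := by
  classical
  -- Several branches of `F` may share a node below level `β`; `S α` picks one for each node.
  choose S hSF hS using fun α => Set.exists_subset_bijOn (F : Set (∀ β, X β)) (nodeAt α)
  let entries (ν : ∀ β, X β) : (∀ α, TreeNode X α → E α) →ₗ[R] ∀ α, E α :=
    LinearMap.pi fun α =>
      if ν ∈ S α then LinearMap.proj (nodeAt α ν) ∘ₗ LinearMap.proj α else 0
  refine ⟨∑ ν ∈ F, treePath f ν β ∘ₗ entries ν, fun ν hν γ hγ y => Subtype.ext ?_⟩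
  choose μ hμS hμ using fun α => (hS α).surjOn (Set.mem_image_of_mem (nodeAt α) hν)
  have hμβ : μ β = ν := hβ (hSF β (hμS β)) hν (hμ β)
  obtain ⟨w, hw, hβw⟩ : ∃ w, continueFrom f γ y = w ∧ continueFrom f β w = w :=
    ⟨_, rfl, continueFrom_continueFrom f hγ y⟩
  rw [coe_treePath, hw]
  have hentries (ν' : ∀ β, X β) (α : ι) :
      entries ν' (alongBranch (R := R) ν w) α = if ν' = μ α then w α else 0 := by
    by_cases hν' : ν' ∈ S α
    · have hiff : nodeAt α ν = nodeAt α ν' ↔ ν' = μ α := by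
        rw [← hμ α, eq_comm, (hS α).injOn.eq_iff hν' (hμS α)]
      simp only [entries, LinearMap.pi_apply, if_pos hν', LinearMap.comp_apply,
        LinearMap.proj_apply, alongBranch_apply, hiff]
    · have hne : ν' ≠ μ α := fun h => hν' (h ▸ hμS α)
      simp only [entries, LinearMap.pi_apply, if_neg hν', LinearMap.zero_apply, if_neg hne]
  funext α τ
  have hcontinue (ν' : ∀ β, X β) : continueFrom f β (entries ν' (alongBranch (R := R) ν w)) α =
      if ν' = μ (min α β) then w α else 0 := by
    rcases lt_or_ge α β with hα | hα
    · rw [continueFrom_apply_of_lt f hα, hentries, min_eq_left hα.le]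
    · rw [continueFrom_apply_of_le f hα, hentries, min_eq_right hα, apply_ite (f β α hα), map_zero,
        ← continueFrom_apply_of_le f hα, hβw]
  have hnode : nodeAt α (μ (min α β)) = nodeAt α ν := by
    rcases le_total α β with hα | hα
    · rw [min_eq_left hα, hμ]
    · rw [min_eq_right hα, hμβ]
  simp only [LinearMap.sum_apply, LinearMap.comp_apply, AddSubmonoidClass.coe_finsetSum,
    Finset.sum_apply, coe_treePath, alongBranch_apply _ (continueFrom f β _), hcontinue]
  rw [Finset.sum_eq_single (μ (min α β))]
  · rw [if_pos rfl, hnode, alongBranch_apply]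
  · intro ν' _ hne
    rw [if_neg hne, ite_self]
  · exact fun hmem => absurd (hSF _ (hμS _)) hmem

lemma absPureIdeal_treeModule_eq_top [NoMaxOrder ι] [Nonempty ι]
    (hE : ∀ i, absPureIdeal R (E i) = ⊤) :
    absPureIdeal R (treeModule f X) = ⊤ := by
  classical
  have hfamily : absPureIdeal R (∀ α, TreeNode X α → E α) = ⊤ := by
    refine top_le_iff.1 (le_trans (le_iInf fun α => ?_) (iInf_absPureIdeal_le_pi _))
    exact le_trans (le_iInf fun _ => (hE α).ge) (iInf_absPureIdeal_le_pi _)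
  refine top_le_iff.1 (hfamily.ge.trans (absPureIdeal_le_of_locallySplit
    (i := (treeModule f X).subtype) fun k ψ => ?_))
  obtain ⟨ψ', rfl⟩ : ∃ ψ', (treeSum f X).rangeRestrict ∘ₗ ψ' = ψ := exists_comp_eq_of_range_le <| by
    rw [LinearMap.range_rangeRestrict]
    exact le_top
  obtain ⟨F, β, hinj, hF⟩ := exists_injOn_nodeAt_of_finset
    (Finset.univ.biUnion fun j : Fin k => (ψ' (Pi.single j 1)).support)
  obtain ⟨r, hr⟩ := exists_treeModule_retraction f hinj
  refine ⟨r, LinearMap.pi_ext' fun j => LinearMap.ext_ring ?_⟩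
  simp only [LinearMap.comp_apply, LinearMap.single_apply, rangeRestrict_treeSum, map_sum]
  refine Finset.sum_congr rfl fun q hq => ?_
  obtain ⟨hqF, hqβ⟩ := hF q (Finset.mem_biUnion.2 ⟨j, Finset.mem_univ j, hq⟩)
  exact hr q.1 hqF q.2 hqβ _

/-- Lifts of the maps `treeModule f X → lim E` attached to two different sets of branches agree on
the bounded part of the tree module for suitable `X`. The difference of these lifts, restricted to a
branch `ν` in exactly one of the two sets, factors through `lim E`. -/
lemma exists_section_of_forall_treeModule_lifts [NoMaxOrder ι] [Nonempty ι] [WellFoundedLT ι]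
    {P : Type u} [AddCommGroup P] [Module R P] (φ : P →ₗ[R] Module.DirectLimit E f)
    (hφ : ∀ (X : ι → Type u) (g : treeModule f X →ₗ[R] Module.DirectLimit E f), ∃ h, φ ∘ₗ h = g) :
    ∃ σ, φ ∘ₗ σ = LinearMap.id := by
  classical
  obtain ⟨X, hX⟩ := exists_tree_forall_exists_eq_of_apply_eq_zero R f P
  choose g hg using exists_treeModule_limit f (X := X)
  choose h hh using fun z => hφ X (g z)
  obtain ⟨z, z', heq, ν, hz, hz'⟩ := hX h
  let δ (β : ι) : (∀ α, E α) →ₗ[R] P := (h z - h z') ∘ₗ treePath f ν β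
  have hδ (β : ι) (y : ∀ α, E α) : δ β (Pi.single β (y β)) = δ β y := by
    rw [eq_comm, ← sub_eq_zero, ← map_sub]
    exact sub_eq_zero.2 (heq ν β _ (by simp))
  refine ⟨Module.DirectLimit.lift R ι E f (fun β => δ β ∘ₗ LinearMap.single R E β) ?_,
    Module.DirectLimit.hom_ext fun β => LinearMap.ext fun x => ?_⟩
  · intro i j hij x
    have hx : f i j hij x = continueFrom f i (Pi.single i x) j := by
      rw [continueFrom_apply_of_le f hij, Pi.single_eq_same]
    rw [hx]
    exact (hδ j _).trans (congrArg (h z - h z') (treePath_continueFrom f ν hij _))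
  · have hφδ (y : ∀ α, E α) : φ (δ β y) = Module.DirectLimit.of R ι E f β (y β) := by
      have hφh (z) (x) : φ (h z x) = g z x := LinearMap.congr_fun (hh z) x
      simp only [δ, LinearMap.comp_apply, LinearMap.sub_apply, map_sub, hφh, hg, if_pos hz,
        if_neg hz', sub_zero]
    simp only [LinearMap.comp_apply, Module.DirectLimit.lift_of, LinearMap.single_apply, hφδ,
      Pi.single_eq_same, LinearMap.id_apply]

end TreeModule

lemma injectiveChainLimitsAlmostAbsPure_of_precover {R : Type u} [CommRing R] {m : Ideal R}
    (hcover : ∀ (M : Type u) [AddCommGroup M] [Module R M],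
      ∃ (E : ModuleCat.{u} R) (f : E →ₗ[R] M), HasAAPPrecoverWith m M E f) :
    InjectiveChainLimitsAlmostAbsPure m := by
  intro ι _ _ _ _ E _ _ f _ hE
  obtain ⟨P, φ, hP, hφ⟩ := hcover (Module.DirectLimit E f)
  obtain ⟨σ, hσ⟩ := exists_section_of_forall_treeModule_lifts f φ fun X g => by
    have htree : IsAlmostAbsolutelyPure m (treeModule f X) := isAlmostAbsolutelyPure_iff_le.2 <| by
      rw [absPureIdeal_treeModule_eq_top f fun i => absPureIdeal_eq_top_of_injective]
      exact le_top
    obtain ⟨h, hh⟩ := hφ _ htree g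
    exact ⟨h, hh.symm⟩
  exact (isAlmostAbsolutelyPure_iff_le.1 hP).trans (absPureIdeal_le_of_leftInverse hσ)

/-! ### Precovers -/

section PureSubmodules

variable {R : Type u} [CommRing R] {E : Type*} [AddCommGroup E] [Module R E]

lemma pureIdeal_bot : pureIdeal (⊥ : Submodule R E) = ⊤ :=
  pureIdeal_eq_top_iff.2 fun k n b y hy =>
    ⟨0, LinearMap.range_zero.le,
      by rw [LinearMap.zero_comp, LinearMap.range_eq_bot.1 (le_bot_iff.1 hy)]⟩

lemma pureIdeal_sSup_eq_top {S : Set (Submodule R E)} (hne : S.Nonempty)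
    (hdir : DirectedOn (· ≤ ·) S) (hS : ∀ K ∈ S, pureIdeal K = ⊤) : pureIdeal (sSup S) = ⊤ := by
  refine pureIdeal_eq_top_iff.2 fun k n b y hy => ?_
  have hcompact := (Submodule.fg_iff_compact _).1
    (Module.Finite.iff_fg.1 (Module.Finite.range (y ∘ₗ b)))
  obtain ⟨K, hKS, hK⟩ :=
    (CompleteLattice.isCompactElement_iff_le_of_directed_sSup_le _ _).1 hcompact S hne hdir hy
  obtain ⟨z, hz, hzb⟩ := pureIdeal_eq_top_iff.1 (hS K hKS) k n b y hK
  exact ⟨z, hz.trans (le_sSup hKS), hzb⟩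

lemma pureIdeal_comap_mkQ_eq_top {K : Submodule R E} (hK : pureIdeal K = ⊤)
    {L : Submodule R (E ⧸ K)} (hL : pureIdeal L = ⊤) : pureIdeal (L.comap K.mkQ) = ⊤ := by
  refine pureIdeal_eq_top_iff.2 fun k n b y hy => ?_
  obtain ⟨z, hz, hzb⟩ := pureIdeal_eq_top_iff.1 hL k n b (K.mkQ ∘ₗ y) <| by
    rwa [LinearMap.comp_assoc, LinearMap.range_comp, Submodule.map_le_iff_le_comap]
  obtain ⟨w, rfl⟩ := Module.projective_lifting_property K.mkQ z K.mkQ_surjective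
  obtain ⟨v, hv, hvb⟩ := pureIdeal_eq_top_iff.1 hK k n b (y - w) <| by
    refine LinearMap.range_le_ker_iff.2 ?_ |>.trans_eq K.ker_mkQ
    rw [← LinearMap.comp_assoc, LinearMap.comp_sub, LinearMap.sub_comp,
      hzb, sub_self]
  refine ⟨w + v, ?_, by rw [LinearMap.add_comp, hvb, LinearMap.sub_comp, add_sub_cancel]⟩
  have hKv : K.mkQ ∘ₗ v = 0 := by rwa [← LinearMap.range_le_ker_iff, K.ker_mkQ]
  rwa [← Submodule.map_le_iff_le_comap, ← LinearMap.range_comp, LinearMap.comp_add, hKv, add_zero]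

lemma exists_maximal_pure_le (N : Submodule R E) :
    ∃ K, Maximal (fun K : Submodule R E => pureIdeal K = ⊤ ∧ K ≤ N) K := by
  obtain ⟨K, -, hK⟩ := zorn_le_nonempty₀ {K : Submodule R E | pureIdeal K = ⊤ ∧ K ≤ N}
    (fun S hS hchain K hK => ⟨sSup S, ⟨pureIdeal_sSup_eq_top ⟨K, hK⟩ hchain.directedOn
      fun L hL => (hS hL).1, sSup_le fun L hL => (hS hL).2⟩, fun _ => le_sSup⟩)
    ⊥ ⟨pureIdeal_bot, bot_le⟩
  exact ⟨K, hK⟩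

end PureSubmodules

section SmallSubmodules

variable (R : Type u) [CommRing R]

lemma exists_generators_of_closed_submodule {α : Type u} (β : α → Type u) :
    ∃ W : Type u, ∀ (E : Type u) [AddCommGroup E] [Module R E] (x : E)
      (op : ∀ a, (β a → E) → E), ∃ p : (W →₀ R) →ₗ[R] E, x ∈ LinearMap.range p ∧
        ∀ a v, (∀ b, v b ∈ LinearMap.range p) → op a v ∈ LinearMap.range p := by
  let arity : α ⊕ Option R → Type u
    | .inl a => β a
    | .inr none => PEmpty
    | .inr (some _) => ULift Bool
  refine ⟨WType arity, fun E _ _ x op => ?_⟩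
  let eval : WType arity → E := WType.elim E fun
    | ⟨.inl a, v⟩ => op a v
    | ⟨.inr none, _⟩ => x
    | ⟨.inr (some r), v⟩ => v ⟨true⟩ + r • v ⟨false⟩
  have hx : x ∈ Set.range eval := ⟨⟨.inr none, PEmpty.elim⟩, rfl⟩
  have hlin (r : R) {y z : E} (hy : y ∈ Set.range eval) (hz : z ∈ Set.range eval) :
      y + r • z ∈ Set.range eval := by
    obtain ⟨⟨s, rfl⟩, ⟨t, rfl⟩⟩ := And.intro hy hz
    exact ⟨⟨.inr (some r), fun b => cond b.down s t⟩, rfl⟩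
  have hzero : 0 ∈ Set.range eval := by
    simpa using hlin (-1) hx hx
  let N : Submodule R E :=
    { carrier := Set.range eval
      zero_mem' := hzero
      add_mem' := fun hy hz => by simpa using hlin 1 hy hz
      smul_mem' := fun r y hy => by simpa using hlin r hzero hy }
  have hN : LinearMap.range (Finsupp.linearCombination R eval) = N := by
    rw [Finsupp.range_linearCombination]
    exact Submodule.span_eq N
  refine ⟨Finsupp.linearCombination R eval, hN ▸ hx, fun a v hv => ?_⟩
  rw [hN] at hv ⊢
  choose t ht using hv
  exact ⟨⟨.inl a, t⟩, congrArg (op a) (funext ht)⟩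

lemma exists_generators_of_pure_submodule :
    ∃ W : Type u, ∀ (E : Type u) [AddCommGroup E] [Module R E] (x : E),
      ∃ p : (W →₀ R) →ₗ[R] E, x ∈ LinearMap.range p ∧ pureIdeal (LinearMap.range p) = ⊤ := by
  classical
  obtain ⟨W, hW⟩ := exists_generators_of_closed_submodule R
    (α := Σ k n : ℕ, ((Fin k → R) →ₗ[R] (Fin n → R)) × (Fin n → R)) (fun a => Fin a.1 → R)
  refine ⟨W, fun E _ _ x => ?_⟩
  obtain ⟨p, hx, hp⟩ := hW E x fun ⟨_, n, b, j⟩ w =>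
    if h : ∃ y : (Fin n → R) →ₗ[R] E, ∀ i, y (b i) = w i then h.choose j else 0
  refine ⟨p, hx, pureIdeal_eq_top_iff.2 fun k n b y hy => ?_⟩
  have h : ∃ z : (Fin n → R) →ₗ[R] E, ∀ i, z (b i) = y (b i) := ⟨y, fun _ => rfl⟩
  refine ⟨h.choose, ?_, LinearMap.ext h.choose_spec⟩
  rintro _ ⟨j, rfl⟩
  simpa only [dif_pos h] using hp ⟨k, n, b, j⟩ (fun i => y (b i)) fun i => hy ⟨i, rfl⟩

lemma exists_generators_of_saturated_submodule (P M : Type u) [AddCommGroup P] [Module R P]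
    [AddCommGroup M] [Module R M] :
    ∃ W : Type u, ∀ (E : Type u) [AddCommGroup E] [Module R E] (g : E →ₗ[R] M),
      ∃ p : (W →₀ R) →ₗ[R] E, ∀ s : P →ₗ[R] E, ∃ s' : P →ₗ[R] E,
        LinearMap.range s' ≤ LinearMap.range p ∧ g ∘ₗ s' = g ∘ₗ s ∧
          ∀ j, s j ∈ LinearMap.range p → s' j = s j := by
  classical
  obtain ⟨W, hW⟩ := exists_generators_of_closed_submodule R
    (α := (P →ₗ[R] M) × Set P × P) (fun a => a.2.1)
  refine ⟨W, fun E _ _ g => ?_⟩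
  obtain ⟨p, -, hp⟩ := hW E 0 fun ⟨φ, D, j⟩ w =>
    if h : ∃ s : P →ₗ[R] E, g ∘ₗ s = φ ∧ ∀ i : D, s i = w i then h.choose j else 0
  refine ⟨p, fun s => ?_⟩
  let D : Set P := {j | s j ∈ LinearMap.range p}
  have h : ∃ s' : P →ₗ[R] E, g ∘ₗ s' = g ∘ₗ s ∧ ∀ i : D, s' i = s i := ⟨s, rfl, fun _ => rfl⟩
  refine ⟨h.choose, ?_, h.choose_spec.1, fun j hj => h.choose_spec.2 ⟨j, hj⟩⟩
  rintro _ ⟨j, rfl⟩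
  simpa only [dif_pos h] using hp ⟨g ∘ₗ s, D, j⟩ (fun i => s i) fun i => i.2

variable {R} in
/-- A system of equations with right-hand side in `range (s' - s)` that is solvable in `E` has a
solution of the form `-s ∘ q` modulo `N`, hence the solution `(s' - s) ∘ q`. -/
lemma pureIdeal_range_sub_eq_top {P E : Type*} [AddCommGroup P] [Module R P] [AddCommGroup E]
    [Module R E] {N : Submodule R E} {s s' : P →ₗ[R] E} (hs' : LinearMap.range s' ≤ N)
    (hss' : ∀ j, s j ∈ N → s' j = s j)
    (hs : pureIdeal (LinearMap.range (N.mkQ ∘ₗ s)) = ⊤) :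
    pureIdeal (LinearMap.range (s' - s)) = ⊤ := by
  refine pureIdeal_eq_top_iff.2 fun k n b y hy => ?_
  have hNs' : N.mkQ ∘ₗ s' = 0 := by rwa [← LinearMap.range_le_ker_iff, N.ker_mkQ]
  obtain ⟨c, hc⟩ := exists_comp_eq_of_range_le hy
  have hNc : N.mkQ ∘ₗ y ∘ₗ b = -((N.mkQ ∘ₗ s) ∘ₗ c) := by
    rw [← hc, LinearMap.sub_comp, LinearMap.comp_sub, ← LinearMap.comp_assoc, hNs',
      LinearMap.zero_comp, zero_sub, LinearMap.comp_assoc]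
  obtain ⟨z, hz, hzb⟩ := pureIdeal_eq_top_iff.1 hs k n b (N.mkQ ∘ₗ y) <| by
    rw [LinearMap.comp_assoc, hNc, LinearMap.range_neg]
    exact LinearMap.range_comp_le_range _ _
  obtain ⟨q, rfl⟩ := exists_comp_eq_of_range_le hz
  refine ⟨-((s' - s) ∘ₗ q), ?_, ?_⟩
  · rw [LinearMap.range_neg]
    exact LinearMap.range_comp_le_range _ _
  have hmem (i : Fin k → R) : s ((q ∘ₗ b + c) i) ∈ N := by
    have hzero : (N.mkQ ∘ₗ s) ∘ₗ (q ∘ₗ b + c) = 0 := by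
      rw [LinearMap.comp_add, ← LinearMap.comp_assoc, hzb, LinearMap.comp_assoc, hNc,
        neg_add_cancel]
    exact N.ker_mkQ.le (LinearMap.congr_fun hzero i)
  have hzero : (s' - s) ∘ₗ (q ∘ₗ b + c) = 0 :=
    LinearMap.ext fun i => sub_eq_zero.2 (hss' _ (hmem i))
  rw [LinearMap.neg_comp, neg_eq_iff_add_eq_zero, ← hc, LinearMap.comp_assoc, ← LinearMap.comp_add,
    hzero]

lemma exists_generators_of_pure_quotient (M : Type u) [AddCommGroup M] [Module R M] :
    ∃ W : Type u, ∀ (E : Type u) [AddCommGroup E] [Module R E] (g : E →ₗ[R] M),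
      ∃ K ≤ LinearMap.ker g, pureIdeal K = ⊤ ∧
        ∃ p : (W →₀ R) →ₗ[R] E ⧸ K, Function.Surjective p := by
  obtain ⟨V, hV⟩ := exists_generators_of_pure_submodule R
  obtain ⟨W, hW⟩ := exists_generators_of_saturated_submodule R (V →₀ R) M
  refine ⟨W, fun E _ _ g => ?_⟩
  obtain ⟨K, ⟨hK, hKg⟩, hmax⟩ := exists_maximal_pure_le (LinearMap.ker g)
  obtain ⟨p, hp⟩ := hW (E ⧸ K) (K.liftQ g hKg)
  refine ⟨K, hKg, hK, p, fun x => ?_⟩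
  obtain ⟨r, hxr, hr⟩ := hV ((E ⧸ K) ⧸ LinearMap.range p) (Submodule.Quotient.mk x)
  obtain ⟨s, rfl⟩ := Module.projective_lifting_property (LinearMap.range p).mkQ r
    (Submodule.mkQ_surjective _)
  obtain ⟨s', hs'p, hgs', hss'⟩ := hp s
  have hle : LinearMap.range (s' - s) ≤ LinearMap.ker (K.liftQ g hKg) := by
    rw [LinearMap.range_le_ker_iff, LinearMap.comp_sub, hgs', sub_self]
  have hbot : LinearMap.range (s' - s) ≤ ⊥ := by
    rw [← K.mkQ_map_self, ← Submodule.map_comap_eq_of_surjective K.mkQ_surjective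
      (LinearMap.range (s' - s))]
    refine Submodule.map_mono (hmax ⟨pureIdeal_comap_mkQ_eq_top hK
      (pureIdeal_range_sub_eq_top hs'p hss' hr), ?_⟩ (K.le_comap_mkQ _))
    exact (Submodule.comap_mono hle).trans_eq (by rw [← LinearMap.ker_comp, K.liftQ_mkQ])
  obtain rfl : s' = s := sub_eq_zero.1 (LinearMap.range_eq_bot.1 (le_bot_iff.1 hbot))
  have hzero : (LinearMap.range p).mkQ ∘ₗ s' = 0 := by
    rwa [← LinearMap.range_le_ker_iff, Submodule.ker_mkQ]
  rw [hzero, LinearMap.range_zero, Submodule.mem_bot] at hxr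
  exact (Submodule.Quotient.mk_eq_zero _).1 hxr

end SmallSubmodules

open DirectSum in
lemma exists_precover_of_forall_factor {R : Type u} [CommRing R] {m : Ideal R} {M : Type u}
    [AddCommGroup M] [Module R M] {ι : Type u} {F : ι → Type u} [∀ i, AddCommGroup (F i)]
    [∀ i, Module R (F i)] (hF : ∀ i, m ≤ absPureIdeal R (F i)) (φ : ∀ i, F i →ₗ[R] M)
    (hfactor : ∀ (E : Type u) [AddCommGroup E] [Module R E], m ≤ absPureIdeal R E →
      ∀ g : E →ₗ[R] M, ∃ (i : ι) (h : E →ₗ[R] F i), φ i ∘ₗ h = g) :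
    ∃ (E : ModuleCat.{u} R) (f : E →ₗ[R] M), HasAAPPrecoverWith m M E f := by
  classical
  refine ⟨ModuleCat.of R (⨁ i, F i), DirectSum.toModule R ι M φ,
    isAlmostAbsolutelyPure_iff_le.2 ((le_iInf hF).trans (iInf_absPureIdeal_le_directSum F)),
    fun E _ _ hE g => ?_⟩
  obtain ⟨i, h, rfl⟩ := hfactor E (isAlmostAbsolutelyPure_iff_le.1 hE) g
  exact ⟨DirectSum.lof R ι F i ∘ₗ h, LinearMap.ext fun x => (DirectSum.toModule_lof R i (h x)).symm⟩

lemma IsAlmostCoherent.exists_precover {R : Type u} [CommRing R] {m : Ideal R} (hm : m * m = m)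
    (h : IsAlmostCoherent m) (M : Type u) [AddCommGroup M] [Module R M] :
    ∃ (E : ModuleCat.{u} R) (f : E →ₗ[R] M), HasAAPPrecoverWith m M E f := by
  obtain ⟨W, hW⟩ := exists_generators_of_pure_quotient R M
  refine exists_precover_of_forall_factor
    (ι := Σ N : {N : Submodule R (W →₀ R) // m ≤ absPureIdeal R ((W →₀ R) ⧸ N)},
      ((W →₀ R) ⧸ N.1) →ₗ[R] M)
    (F := fun i => (W →₀ R) ⧸ i.1.1) (fun i => i.1.2) (fun i => i.2) fun E _ _ hE g => ?_
  obtain ⟨K, hKg, hK, p, hp⟩ := hW E g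
  have hquot : m ≤ absPureIdeal R (E ⧸ K) :=
    h.le_absPureIdeal_of_surjective hm K.mkQ_surjective hE (by rw [K.ker_mkQ, hK]; exact le_top)
  let e := p.quotKerEquivOfSurjective hp
  refine ⟨⟨⟨LinearMap.ker p, hquot.trans (absPureIdeal_le_of_leftInverse e.symm_comp)⟩,
    K.liftQ g hKg ∘ₗ e.toLinearMap⟩, e.symm.toLinearMap ∘ₗ K.mkQ, LinearMap.ext fun x => ?_⟩
  simp

/-! ### Covers -/

section Cover

variable {R : Type u} [CommRing R]

/-- `φ` is a precover for the class `𝒞`. -/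
def IsPrecover (𝒞 : ∀ (E : Type u) [AddCommGroup E] [Module R E], Prop) {F M : Type u}
    [AddCommGroup F] [Module R F] [AddCommGroup M] [Module R M] (φ : F →ₗ[R] M) : Prop :=
  𝒞 F ∧ ∀ (E : Type u) [AddCommGroup E] [Module R E], 𝒞 E →
    ∀ g : E →ₗ[R] M, ∃ h : E →ₗ[R] F, φ ∘ₗ h = g

/-- The class `𝒞` is closed under direct limits over nonempty directed sets. -/
def ClosedUnderDirectLimits (𝒞 : ∀ (E : Type u) [AddCommGroup E] [Module R E], Prop) : Prop :=
  ∀ (ι : Type u) [PartialOrder ι] [IsDirectedOrder ι] [Nonempty ι] [DecidableEq ι]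
    (E : ι → Type u) [∀ i, AddCommGroup (E i)] [∀ i, Module R (E i)]
    (f : ∀ i j, i ≤ j → E i →ₗ[R] E j) [DirectedSystem E fun i j h => f i j h],
    (∀ i, 𝒞 (E i)) → 𝒞 (Module.DirectLimit E f)

variable {M F : Type u} [AddCommGroup M] [Module R M] [AddCommGroup F] [Module R F]
  {𝒞 : ∀ (E : Type u) [AddCommGroup E] [Module R E], Prop} {φ : F →ₗ[R] M}

/-- The maps `q α`, for `α < β`, are endomorphisms of `F` over `φ` compatible with the transition
maps `u γ α`, for `α < γ`, of a chain of copies of `F`. -/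
structure IsConeBelow (φ : F →ₗ[R] M) {J : Type*} [LT J] (u : J → J → F →ₗ[R] F) (β : J)
    (q : J → F →ₗ[R] F) : Prop where
  comp_eq : ∀ α < β, φ ∘ₗ q α = φ
  comp_transition : ∀ α γ, α < γ → γ < β → q γ ∘ₗ u γ α = q α

lemma IsPrecover.exists_isConeBelow (hφ : IsPrecover 𝒞 φ) (h𝒞 : ClosedUnderDirectLimits 𝒞)
    {J : Type u} [LinearOrder J] {u : J → J → F →ₗ[R] F} {β : J}
    (hu : ∀ γ < β, IsConeBelow φ u γ (u γ)) : ∃ q, IsConeBelow φ u β q := by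
  classical
  rcases isEmpty_or_nonempty (Set.Iio β) with hβ | hβ
  · exact ⟨0, fun α hα => (hβ.false ⟨α, hα⟩).elim, fun α γ _ hγ => (hβ.false ⟨γ, hγ⟩).elim⟩
  let f (i j : Set.Iio β) (_ : i ≤ j) : F →ₗ[R] F := if i = j then LinearMap.id else u j i
  have hf {i j : Set.Iio β} (h : i < j) : f i j h.le = u j i := if_neg h.ne
  have hrefl (i : Set.Iio β) : f i i le_rfl = LinearMap.id := if_pos rfl
  have : DirectedSystem (fun _ : Set.Iio β => F) fun i j h => f i j h := by
    refine ⟨fun i x => by rw [hrefl, LinearMap.id_apply], fun k j i hij hjk x => ?_⟩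
    rcases hij.eq_or_lt with rfl | hij
    · rw [hrefl, LinearMap.id_apply]
    rcases hjk.eq_or_lt with rfl | hjk
    · rw [hrefl, LinearMap.id_apply]
    rw [hf hij, hf hjk, hf (hij.trans hjk)]
    exact LinearMap.congr_fun ((hu k k.2).comp_transition i j hij hjk) x
  have hφf (i j : Set.Iio β) (h : i ≤ j) (x : F) : φ (f i j h x) = φ x := by
    rcases h.eq_or_lt with rfl | h
    · rw [hrefl, LinearMap.id_apply]
    · rw [hf h]
      exact LinearMap.congr_fun ((hu j j.2).comp_eq i h) x
  obtain ⟨p, hp⟩ := hφ.2 _ (h𝒞 _ _ f fun _ => hφ.1)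
    (Module.DirectLimit.lift R (Set.Iio β) (fun _ => F) f (fun _ => φ) hφf)
  let q (α : J) : F →ₗ[R] F :=
    if h : α < β then p ∘ₗ Module.DirectLimit.of R _ (fun _ => F) f ⟨α, h⟩ else 0
  have hq (α : J) (h : α < β) : q α = p ∘ₗ Module.DirectLimit.of R _ (fun _ => F) f ⟨α, h⟩ :=
    dif_pos h
  refine ⟨q, fun α hα => ?_, fun α γ hαγ hγ => ?_⟩
  · refine LinearMap.ext fun x => ?_
    rw [hq α hα]
    exact (LinearMap.congr_fun hp _).trans (Module.DirectLimit.lift_of (f := f) _ _ x)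
  · refine LinearMap.ext fun x => ?_
    rw [hq γ hγ, hq α (hαγ.trans hγ), ← hf (i := ⟨α, hαγ.trans hγ⟩) (j := ⟨γ, hγ⟩) hαγ]
    exact congrArg p (Module.DirectLimit.of_f (G := fun _ => F) (f := f) (hij := hαγ.le))

/-- At stage `β` the maps to the `β`-th copy of `F` can be postcomposed with a chosen endomorphism
`T q` over `φ`. -/
lemma IsPrecover.exists_chain (hφ : IsPrecover 𝒞 φ) (h𝒞 : ClosedUnderDirectLimits 𝒞)
    {J : Type u} [LinearOrder J] [WellFoundedLT J] {T : (J → F →ₗ[R] F) → F →ₗ[R] F}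
    (hT : ∀ q, φ ∘ₗ T q = φ) :
    ∃ u : J → J → F →ₗ[R] F, ∀ β, IsConeBelow φ u β (u β) ∧
      ∃ q, IsConeBelow φ u β q ∧ ∀ α, u β α = T q ∘ₗ q α := by
  classical
  let step (β : J) (prev : ∀ γ < β, J → F →ₗ[R] F) : J → F →ₗ[R] F :=
    if h : ∃ q : J → F →ₗ[R] F, (∀ α < β, φ ∘ₗ q α = φ) ∧
        ∀ α γ, α < γ → ∀ hγ : γ < β, q γ ∘ₗ prev γ hγ α = q α
    then fun α => T h.choose ∘ₗ h.choose α else 0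
  let u : J → J → F →ₗ[R] F := WellFoundedLT.fix step
  have hu (β : J) (hβ : ∃ q, IsConeBelow φ u β q) :
      ∃ q, IsConeBelow φ u β q ∧ ∀ α, u β α = T q ∘ₗ q α := by
    have h : ∃ q : J → F →ₗ[R] F, (∀ α < β, φ ∘ₗ q α = φ) ∧
        ∀ α γ, α < γ → γ < β → q γ ∘ₗ u γ α = q α := hβ.imp fun q hq => ⟨hq.1, hq.2⟩
    exact ⟨h.choose, ⟨h.choose_spec.1, h.choose_spec.2⟩,
      congrFun ((WellFoundedLT.fix_eq step β).trans (dif_pos h))⟩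
  have hcone (β : J) (hβ : ∃ q, IsConeBelow φ u β q) : IsConeBelow φ u β (u β) := by
    obtain ⟨q, hq, huq⟩ := hu β hβ
    refine ⟨fun α hα => ?_, fun α γ hαγ hγ => ?_⟩
    · rw [huq, ← LinearMap.comp_assoc, hT, hq.comp_eq α hα]
    · rw [huq, huq, LinearMap.comp_assoc, hq.comp_transition α γ hαγ hγ]
  have hchain (β : J) : ∃ q, IsConeBelow φ u β q := by
    induction β using WellFoundedLT.induction with
    | ind β ih => exact hφ.exists_isConeBelow h𝒞 fun γ hγ => hcone γ (ih γ hγ)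
  exact ⟨u, fun β => ⟨hcone β (hchain β), hu β (hchain β)⟩⟩

lemma exists_wellOrder_forall_not_injective (X : Type u) :
    ∃ (J : Type u) (_ : LinearOrder J) (_ : WellFoundedLT J),
      ∀ e : J → X, ¬ Function.Injective e := by
  refine ⟨(Cardinal.mk (Set X)).ord.ToType, inferInstance, inferInstance, fun e he => ?_⟩
  have hle := Cardinal.mk_le_of_injective he
  rw [Cardinal.mk_ord_toType, Cardinal.mk_set] at hle
  exact (Cardinal.cantor _).not_ge hle

/-- Otherwise the kernels of the maps out of the first module of a chain would grow forever. -/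
lemma IsPrecover.exists_ker_comp_eq (hφ : IsPrecover 𝒞 φ) (h𝒞 : ClosedUnderDirectLimits 𝒞) :
    ∃ h : F →ₗ[R] F, φ ∘ₗ h = φ ∧
      ∀ k : F →ₗ[R] F, φ ∘ₗ k = φ → LinearMap.ker (k ∘ₗ h) = LinearMap.ker h := by
  by_contra! hcon
  have hex (h : F →ₗ[R] F) : ∃ k : F →ₗ[R] F, φ ∘ₗ k = φ ∧
      (φ ∘ₗ h = φ → LinearMap.ker h < LinearMap.ker (k ∘ₗ h)) := by
    by_cases hh : φ ∘ₗ h = φ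
    · obtain ⟨k, hk, hne⟩ := hcon h hh
      exact ⟨k, hk, fun _ => (LinearMap.ker_le_ker_comp h k).lt_of_ne hne.symm⟩
    · exact ⟨LinearMap.id, LinearMap.comp_id φ, fun h => absurd h hh⟩
  choose k hk hlt using hex
  obtain ⟨J, _, _, hJ⟩ := exists_wellOrder_forall_not_injective (Submodule R F)
  obtain ⟨u, hu⟩ := hφ.exists_chain h𝒞 (J := WithBot J) (T := fun q => k (q ⊥)) fun q => hk _
  refine hJ (fun β => LinearMap.ker (u β ⊥)) (StrictMono.injective fun α β hαβ => ?_)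
  obtain ⟨q, hq, huq⟩ := (hu β).2
  calc LinearMap.ker (u α ⊥)
      ≤ LinearMap.ker (q ⊥) := by
        rw [← hq.comp_transition ⊥ α (WithBot.bot_lt_coe α) (WithBot.coe_lt_coe.2 hαβ)]
        exact LinearMap.ker_le_ker_comp _ _
    _ < LinearMap.ker (u β ⊥) := by
        rw [huq]
        exact hlt _ (hq.comp_eq ⊥ (WithBot.bot_lt_coe β))

lemma ClosedUnderDirectLimits.exists_iterateLimit (h𝒞 : ClosedUnderDirectLimits 𝒞) (hF : 𝒞 F)
    {h : F →ₗ[R] F} (hh : φ ∘ₗ h = φ) :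
    ∃ (X : ModuleCat.{u} R) (ψ : X →ₗ[R] M) (of : ℕ → F →ₗ[R] X), 𝒞 X ∧ (∀ n, ψ ∘ₗ of n = φ) ∧
      (∀ n, of (n + 1) ∘ₗ h = of n) ∧ ∀ x, ∃ n y, of n y = x := by
  let f (i j : ULift.{u} ℕ) (_ : i ≤ j) : F →ₗ[R] F := h ^ (j.down - i.down)
  have : DirectedSystem (fun _ : ULift.{u} ℕ => F) fun i j h => f i j h := by
    refine ⟨fun i x => by simp [f], fun k j i hij hjk x => ?_⟩
    change (h ^ (k.down - j.down) * h ^ (j.down - i.down)) x = (h ^ (k.down - i.down)) x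
    rw [← pow_add, tsub_add_tsub_cancel (α := ℕ) hjk hij]
  have hpow (n : ℕ) : φ ∘ₗ (h ^ n) = φ := by
    induction n with
    | zero => exact LinearMap.comp_id φ
    | succ n ih => rw [pow_succ, Module.End.mul_eq_comp, ← LinearMap.comp_assoc, ih, hh]
  have hφf (i j : ULift.{u} ℕ) (hij : i ≤ j) (x : F) : φ (f i j hij x) = φ x :=
    LinearMap.congr_fun (hpow _) x
  refine ⟨ModuleCat.of R (Module.DirectLimit (fun _ : ULift.{u} ℕ => F) f),
    Module.DirectLimit.lift R _ (fun _ => F) f (fun _ => φ) hφf,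
    fun n => Module.DirectLimit.of R _ (fun _ => F) f ⟨n⟩, h𝒞 _ _ f fun _ => hF,
    fun n => LinearMap.ext fun x => Module.DirectLimit.lift_of (f := f) (fun _ => φ) hφf x,
    fun n => LinearMap.ext fun x => ?_, fun x => ?_⟩
  · have hn : (⟨n⟩ : ULift.{u} ℕ) ≤ ⟨n + 1⟩ := n.le_succ
    have hfn : f ⟨n⟩ ⟨n + 1⟩ hn = h := by simp [f]
    conv_lhs => rw [← hfn]
    exact Module.DirectLimit.of_f (G := fun _ => F) (f := f) (hij := hn)
  · obtain ⟨⟨n⟩, y, hy⟩ := Module.DirectLimit.exists_of x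
    exact ⟨n, y, hy⟩

/-- If `h` has the largest possible kernel among endomorphisms over `φ`, the limit of the iterates
of `h` embeds into `F`. -/
lemma IsPrecover.exists_forall_injective (hφ : IsPrecover 𝒞 φ) (h𝒞 : ClosedUnderDirectLimits 𝒞) :
    ∃ (X : ModuleCat.{u} R) (ψ : X →ₗ[R] M), IsPrecover 𝒞 ψ ∧
      ∀ e : X →ₗ[R] X, ψ ∘ₗ e = ψ → Function.Injective e := by
  obtain ⟨h, hh, hker⟩ := hφ.exists_ker_comp_eq h𝒞
  obtain ⟨X, ψ, of, hX, hψ, hof, hsurj⟩ := h𝒞.exists_iterateLimit hφ.1 hh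
  have hinj (p : X →ₗ[R] F) (hp : φ ∘ₗ p = ψ) : Function.Injective p := by
    refine (injective_iff_map_eq_zero p).2 fun x hx => ?_
    obtain ⟨n, y, rfl⟩ := hsurj x
    have hk : φ ∘ₗ (p ∘ₗ of (n + 1)) = φ := by rw [← LinearMap.comp_assoc, hp, hψ]
    have hy : y ∈ LinearMap.ker h := by
      rwa [← hker _ hk, LinearMap.comp_assoc, hof]
    rw [← hof, LinearMap.comp_apply, LinearMap.mem_ker.1 hy, map_zero]
  refine ⟨X, ψ, ⟨hX, fun E _ _ hE g => ?_⟩, fun e he => ?_⟩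
  · obtain ⟨k, rfl⟩ := hφ.2 E hE g
    exact ⟨of 0 ∘ₗ k, by rw [← LinearMap.comp_assoc, hψ]⟩
  · obtain ⟨p, hp⟩ := hφ.2 X hX ψ
    refine Function.Injective.of_comp (f := p) (hinj (p ∘ₗ e) ?_)
    rw [← LinearMap.comp_assoc, hp, he]

/-- Otherwise, all the modules of an arbitrarily long chain with non-surjective transition maps
would embed into `F`. -/
lemma IsPrecover.surjective_of_forall_injective (hφ : IsPrecover 𝒞 φ)
    (h𝒞 : ClosedUnderDirectLimits 𝒞)
    (hinj : ∀ h : F →ₗ[R] F, φ ∘ₗ h = φ → Function.Injective h) {h : F →ₗ[R] F}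
    (hh : φ ∘ₗ h = φ) : Function.Surjective h := by
  by_contra! hsurj
  obtain ⟨y, hy⟩ : ∃ y, ∀ x, h x ≠ y := by
    simpa [Function.Surjective] using hsurj
  obtain ⟨J, _, _, hJ⟩ := exists_wellOrder_forall_not_injective F
  obtain ⟨u, hu⟩ := hφ.exists_chain h𝒞 (J := WithTop J) (T := fun _ => h) fun _ => hh
  refine hJ (fun α => u ⊤ α y) (Function.Injective.of_lt_imp_ne fun α β hαβ heq => ?_)
  have hβ : (β : WithTop J) < ⊤ := WithTop.coe_lt_top β
  obtain ⟨q, -, huq⟩ := (hu β).2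
  rw [← (hu ⊤).1.comp_transition α β (WithTop.coe_lt_coe.2 hαβ) hβ, huq] at heq
  exact hy _ (hinj _ ((hu ⊤).1.comp_eq β hβ) heq)

lemma IsPrecover.exists_cover (hφ : IsPrecover 𝒞 φ) (h𝒞 : ClosedUnderDirectLimits 𝒞) :
    ∃ (X : ModuleCat.{u} R) (ψ : X →ₗ[R] M), IsPrecover 𝒞 ψ ∧
      ∀ e : X →ₗ[R] X, ψ ∘ₗ e = ψ → Function.Bijective e := by
  obtain ⟨X, ψ, hψ, hinj⟩ := hφ.exists_forall_injective h𝒞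
  exact ⟨X, ψ, hψ, fun e he => ⟨hinj e he, hψ.surjective_of_forall_injective h𝒞 hinj he⟩⟩

end Cover

/-! ### Quotients, limits and covers over almost coherent rings -/

section Implications

variable {R : Type u} [CommRing R] {m : Ideal R}

lemma IsAbsolutelyPure.isAlmostAbsolutelyPure {E : Type u} [AddCommGroup E] [Module R E]
    (hE : IsAbsolutelyPure (R := R) E) : IsAlmostAbsolutelyPure m E :=
  fun N _ _ hN s _ x => by rw [hE N hN x, smul_zero]

lemma IsAlmostCoherent.isAlmostAbsolutelyPure_of_isAlmostPure (hm : m * m = m)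
    (h : IsAlmostCoherent m) {A B C : Type u} [AddCommGroup A] [Module R A] [AddCommGroup B]
    [Module R B] [AddCommGroup C] [Module R C] {f : A →ₗ[R] B} {g : B →ₗ[R] C}
    (hg : Function.Surjective g) (hfg : LinearMap.range f = LinearMap.ker g)
    (hf : IsAlmostPure m f) (hB : IsAlmostAbsolutelyPure m B) : IsAlmostAbsolutelyPure m C :=
  isAlmostAbsolutelyPure_iff_le.2 <| h.le_absPureIdeal_of_surjective hm hg
    (isAlmostAbsolutelyPure_iff_le.1 hB) (hfg ▸ hf.le_pureIdeal)

lemma IsAlmostCoherent.isAlmostAbsolutelyPure_directLimit (hm : m * m = m)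
    (h : IsAlmostCoherent m) {ι : Type u} [Preorder ι] [IsDirectedOrder ι] [DecidableEq ι]
    {E : ι → Type u} [∀ i, AddCommGroup (E i)] [∀ i, Module R (E i)]
    (f : ∀ i j, i ≤ j → E i →ₗ[R] E j) [DirectedSystem E fun i j h => f i j h]
    (hE : ∀ i, IsAlmostAbsolutelyPure m (E i)) :
    IsAlmostAbsolutelyPure m (Module.DirectLimit E f) := by
  refine isAlmostAbsolutelyPure_iff_le.2 <| h.le_absPureIdeal_of_surjective hm
    (directSumToLimit_surjective (f := f)) ?_ (le_top.trans_eq pureIdeal_ker_directSumToLimit.symm)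
  exact (le_iInf fun i => isAlmostAbsolutelyPure_iff_le.1 (hE i)).trans
    (iInf_absPureIdeal_le_directSum E)

lemma IsAlmostCoherent.exists_cover (hm : m * m = m) (h : IsAlmostCoherent m) (M : Type u)
    [AddCommGroup M] [Module R M] :
    ∃ (E : ModuleCat.{u} R) (f : E →ₗ[R] M), HasAAPPrecoverWith m M E f ∧
      ∀ e : (E : Type u) →ₗ[R] E, f ∘ₗ e = f → Function.Bijective e := by
  obtain ⟨F, φ, hF, hφ⟩ := h.exists_precover hm M
  have hprecover : IsPrecover (fun E _ _ => IsAlmostAbsolutelyPure m E) φ :=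
    ⟨hF, fun E _ _ hE g => (hφ E hE g).imp fun _ => Eq.symm⟩
  obtain ⟨X, ψ, ⟨hX, hψ⟩, hbij⟩ := hprecover.exists_cover
    fun _ _ _ _ _ _ _ _ f _ hE => h.isAlmostAbsolutelyPure_directLimit hm f hE
  exact ⟨X, ψ, ⟨hX, fun E _ _ hE g => (hψ E hE g).imp fun _ => Eq.symm⟩, hbij⟩

lemma isAlmostCoherent_of_directLimits (hm : m * m = m)
    (hlim : ∀ (ι : Type u) [PartialOrder ι] [IsDirectedOrder ι] [DecidableEq ι]
      (E : ι → Type u) [∀ i, AddCommGroup (E i)] [∀ i, Module R (E i)]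
      (f : ∀ i j, i ≤ j → E i →ₗ[R] E j) [DirectedSystem E fun i j h => f i j h],
      (∀ i, IsAbsolutelyPure (R := R) (E i)) →
        IsAlmostAbsolutelyPure m (Module.DirectLimit E f)) :
    IsAlmostCoherent m :=
  InjectiveChainLimitsAlmostAbsPure.isAlmostCoherent hm fun ι _ _ _ _ E _ _ f _ _ =>
    isAlmostAbsolutelyPure_iff_le.1 <| hlim ι E f fun _ =>
      isAbsolutelyPure_iff_eq_top.2 absPureIdeal_eq_top_of_injective

lemma isAlmostCoherent_of_pureQuotients (hm : m * m = m)
    (hquot : ∀ (A B C : Type u) [AddCommGroup A] [Module R A] [AddCommGroup B] [Module R B]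
      [AddCommGroup C] [Module R C] (f : A →ₗ[R] B) (g : B →ₗ[R] C),
      Function.Injective f → Function.Surjective g → LinearMap.range f = LinearMap.ker g →
        IsPure f → IsAbsolutelyPure (R := R) B → IsAlmostAbsolutelyPure m C) :
    IsAlmostCoherent m := by
  refine isAlmostCoherent_of_directLimits hm fun ι _ _ _ E _ _ f _ hE => ?_
  let K := LinearMap.ker (directSumToLimit f)
  have hpure : IsPure K.subtype := isPure_of_pureIdeal_eq_top K.injective_subtype <| by
    rw [K.range_subtype, pureIdeal_ker_directSumToLimit]
  have hsum : IsAbsolutelyPure (R := R) (DirectSum ι E) := by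
    refine isAbsolutelyPure_iff_eq_top.2 (top_le_iff.1 ?_)
    exact (le_iInf fun i => (isAbsolutelyPure_iff_eq_top.1 (hE i)).ge).trans
      (iInf_absPureIdeal_le_directSum E)
  exact hquot _ _ _ K.subtype (directSumToLimit f) K.injective_subtype
    directSumToLimit_surjective K.range_subtype hpure hsum

end Implications

/-- Characterizations of almost coherent rings via almost absolutely
pure modules. -/
theorem almostCoherent_iff_almostAbsolutelyPure_conditions
    {R : Type u} [CommRing R] (m : Ideal R) (hm : m * m = m) :
    -- (1) ↔ (2)
    ((IsAlmostCoherent m ↔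
      (∀ (A B C : Type u) [AddCommGroup A] [Module R A] [AddCommGroup B] [Module R B]
          [AddCommGroup C] [Module R C],
        ∀ (f : A →ₗ[R] B) (g : B →ₗ[R] C),
          Function.Injective f → Function.Surjective g →
            LinearMap.range f = LinearMap.ker g → IsAlmostPure m f →
              IsAlmostAbsolutelyPure m B → IsAlmostAbsolutelyPure m C)) ∧
    -- (1) ↔ (3)
    (IsAlmostCoherent m ↔
      (∀ (A B C : Type u) [AddCommGroup A] [Module R A] [AddCommGroup B] [Module R B]
          [AddCommGroup C] [Module R C],
        ∀ (f : A →ₗ[R] B) (g : B →ₗ[R] C),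
          Function.Injective f → Function.Surjective g →
            LinearMap.range f = LinearMap.ker g → IsPure f →
              IsAlmostAbsolutelyPure m B → IsAlmostAbsolutelyPure m C)) ∧
    -- (1) ↔ (4)
    (IsAlmostCoherent m ↔
      (∀ (A B C : Type u) [AddCommGroup A] [Module R A] [AddCommGroup B] [Module R B]
          [AddCommGroup C] [Module R C],
        ∀ (f : A →ₗ[R] B) (g : B →ₗ[R] C),
          Function.Injective f → Function.Surjective g →
            LinearMap.range f = LinearMap.ker g → IsPure f →
              IsAbsolutelyPure (R := R) B → IsAlmostAbsolutelyPure m C)) ∧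
    -- (1) ↔ (5)
    (IsAlmostCoherent m ↔
      (∀ (ι : Type u) [PartialOrder ι] [IsDirected ι (· ≤ ·)] [DecidableEq ι]
          (E : ι → Type u) [∀ i, AddCommGroup (E i)] [∀ i, Module R (E i)]
          (f : ∀ i j, i ≤ j → E i →ₗ[R] E j) [DirectedSystem E fun i j h => f i j h],
        (∀ i, IsAbsolutelyPure (R := R) (E i)) →
          IsAlmostAbsolutelyPure m (Module.DirectLimit E f))) ∧
    -- (1) ↔ (6)
    (IsAlmostCoherent m ↔
      (∀ (ι : Type u) [PartialOrder ι] [IsDirected ι (· ≤ ·)] [DecidableEq ι]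
          (E : ι → Type u) [∀ i, AddCommGroup (E i)] [∀ i, Module R (E i)]
          (f : ∀ i j, i ≤ j → E i →ₗ[R] E j) [DirectedSystem E fun i j h => f i j h],
        (∀ i, IsAlmostAbsolutelyPure m (E i)) →
          IsAlmostAbsolutelyPure m (Module.DirectLimit E f))) ∧
    -- (1) ↔ (7)
    (IsAlmostCoherent m ↔
      (∀ (M : Type u) [AddCommGroup M] [Module R M],
        ∃ (E : ModuleCat.{u} R) (f : E →ₗ[R] M), HasAAPPrecoverWith m M E f)) ∧
    -- (1) ↔ (8)
    (IsAlmostCoherent m ↔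
      (∀ (M : Type u) [AddCommGroup M] [Module R M],
        ∃ (E : ModuleCat.{u} R) (f : E →ₗ[R] M), HasAAPPrecoverWith m M E f ∧
          ∀ h : (E : Type u) →ₗ[R] E, f ∘ₗ h = f → Function.Bijective h))) := by
  have of_quotients := isAlmostCoherent_of_pureQuotients (m := m) hm
  have of_limits := isAlmostCoherent_of_directLimits (m := m) hm
  have of_precovers := fun hcover =>
    (injectiveChainLimitsAlmostAbsPure_of_precover (m := m) hcover).isAlmostCoherent hm
  refine ⟨⟨?_, fun h2 => of_quotients ?_⟩, ⟨?_, fun h3 => of_quotients ?_⟩, ⟨?_, of_quotients⟩,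
    ⟨?_, of_limits⟩, ⟨?_, fun h6 => of_limits ?_⟩,
    ⟨fun h M _ _ => h.exists_precover hm M, of_precovers⟩,
    ⟨fun h M _ _ => h.exists_cover hm M, fun h8 => of_precovers ?_⟩⟩
  · exact fun h A B C _ _ _ _ _ _ f g _ hg hfg hpure hB =>
      h.isAlmostAbsolutelyPure_of_isAlmostPure hm hg hfg hpure hB
  · exact fun A B C _ _ _ _ _ _ f g hf hg hfg hpure hB =>
      h2 A B C f g hf hg hfg (hpure.isAlmostPure m) hB.isAlmostAbsolutelyPure
  · exact fun h A B C _ _ _ _ _ _ f g _ hg hfg hpure hB =>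
      h.isAlmostAbsolutelyPure_of_isAlmostPure hm hg hfg (hpure.isAlmostPure m) hB
  · exact fun A B C _ _ _ _ _ _ f g hf hg hfg hpure hB =>
      h3 A B C f g hf hg hfg hpure hB.isAlmostAbsolutelyPure
  · exact fun h A B C _ _ _ _ _ _ f g _ hg hfg hpure hB =>
      h.isAlmostAbsolutelyPure_of_isAlmostPure hm hg hfg (hpure.isAlmostPure m)
        hB.isAlmostAbsolutelyPure
  · exact fun h ι _ _ _ E _ _ f _ hE =>
      h.isAlmostAbsolutelyPure_directLimit hm f fun i => (hE i).isAlmostAbsolutelyPure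
  · exact fun h ι _ _ _ E _ _ f _ hE => h.isAlmostAbsolutelyPure_directLimit hm f hE
  · exact fun ι _ _ _ E _ _ f _ hE => h6 ι E f fun i => (hE i).isAlmostAbsolutelyPure
  · exact fun M _ _ => (h8 M).imp fun _ => Exists.imp fun _ => And.left
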